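/- arXiv:2203.02128 — 8 statements merged into one kernel-verified Lean document; each statement's English description precedes it below -/
import Mathlib

section
/- Let C be a compact metrizable topological space, p a Borel probability measure on C, f : C → ℝ a bounded measurable function, and ε > 0. Let φ : ℝ → (−∞, ∞] be convex and lower semicontinuous with φ(1) = 0 and φ(u) = +∞ for u < 0. Then the infimum, over all Borel probability measures q on C with D_φ(q, p) ≤ ε, of ∫ f dq, equals the supremum over λ ≥ 0 and b ∈ ℝ of b − λ·ε − ∫ (λφ)*(b − f(c)) dp(c), where (λφ)* denotes the convex conjugate of the function u ↦ λ·φ(u). -/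
/-!
Weak duality (`DRBO.weak_duality`) is the Fenchel-Young inequality
`(b - f) r - lam φ(r) ≤ (lam φ)*(b - f)` integrated against `p`, with `r = dq/dp`.

For strong duality, densities `r` are paired with integrable majorants `T` of `φ ∘ r`
(`DRBO.Adm`), so that all integrals are real. The triples (objective, divergence, mass) lying above
attainable ones form a convex subset of `ℝ³`; separating it from `(P - δ, ε, 1)`, for `P` a lower
bound of the primal problem, yields the multipliers `lam` and `b`. Two points need care.

* Finite-dimensional separation of an open set is used, so the mass constraint is thickened to
  `|∫ r - s| < η`. That this loses at most `δ` is the lower semicontinuity of the primal value in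
  the mass (`DRBO.near_feasible`). When the domain of `φ` extends to both sides of `1` it follows
  by mixing with constant densities; when `1` is an endpoint of the domain, a density of mass
  close to `1` is itself close to `1` in `L¹`.
* The multiplier `lam` can vanish, and then `lam * φ` forgets the domain of `φ`. A small increase
  of `lam`, compensated by a change of `b` through an affine minorant of `φ`, makes it positive
  (`DRBO.exists_multiplier_pos`).

The infimum of the Lagrangian over `r` is then identified with minus the integral of the conjugate
(`DRBO.eIntegral_conj_le`): the conjugate is a supremum over a countable dense subset of the
epigraph of `φ`, finite maxima are attained by measurable selections, and monotone convergence
applies.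
-/

open MeasureTheory
open scoped ENNReal Classical

/-- The canonical map `EReal → ℝ≥0∞` sending negative values to `0` and `⊤` to `⊤`. -/
noncomputable def erealToENNReal (x : EReal) : ℝ≥0∞ :=
  if x = ⊤ then ⊤ else ENNReal.ofReal x.toReal

/-- Integral of an `EReal`-valued function: (lower) integral of the positive part minus
the (lower) integral of the negative part. -/
noncomputable def eIntegral {C : Type*} [MeasurableSpace C] (p : Measure C) (g : C → EReal) :
    EReal :=
  ((∫⁻ c, erealToENNReal (g c) ∂p : ℝ≥0∞) : EReal) -
    ((∫⁻ c, erealToENNReal (-(g c)) ∂p : ℝ≥0∞) : EReal)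

/-- The `φ`-divergence `D_φ(q, p) = ∫ φ(dq/dp) dp` when `q ≪ p`, and `⊤` otherwise. -/
noncomputable def fDiv {C : Type*} [MeasurableSpace C] (φ : ℝ → EReal) (q p : Measure C) :
    EReal :=
  if q ≪ p then eIntegral p (fun c => φ ((q.rnDeriv p c).toReal)) else ⊤

open Filter Topology

namespace DRBO

/-! ### The extended integral -/

section Integral

variable {C : Type*} [MeasurableSpace C] {p : Measure C}

lemma erealToENNReal_mono {x y : EReal} (h : x ≤ y) : erealToENNReal x ≤ erealToENNReal y := by
  unfold erealToENNReal
  by_cases hy : y = ⊤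
  · simp [hy]
  have hx : x ≠ ⊤ := fun hx => hy (top_le_iff.mp (hx ▸ h))
  rw [if_neg hx, if_neg hy]
  by_cases hb : x = ⊥
  · simp [hb]
  exact ENNReal.ofReal_le_ofReal (EReal.toReal_le_toReal h hb hy)

lemma erealToENNReal_coe (x : ℝ) : erealToENNReal (x : EReal) = ENNReal.ofReal x := by
  simp [erealToENNReal]

lemma eIntegral_mono {g h : C → EReal} (hgh : ∀ᵐ c ∂p, g c ≤ h c) :
    eIntegral p g ≤ eIntegral p h := by
  unfold eIntegral
  apply EReal.sub_le_sub
  · refine EReal.coe_ennreal_le_coe_ennreal_iff.mpr (lintegral_mono_ae ?_)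
    filter_upwards [hgh] with c hc using erealToENNReal_mono hc
  · refine EReal.coe_ennreal_le_coe_ennreal_iff.mpr (lintegral_mono_ae ?_)
    filter_upwards [hgh] with c hc using erealToENNReal_mono (EReal.neg_le_neg_iff.mpr hc)

lemma coe_ennreal_eq_coe_toReal {x : ℝ≥0∞} (h : x ≠ ⊤) : (x : EReal) = ((x.toReal : ℝ) : EReal) := by
  lift x to NNReal using h
  rfl

lemma eIntegral_coe {G : C → ℝ} (hG : Integrable G p) :
    eIntegral p (fun c => (G c : EReal)) = ((∫ c, G c ∂p : ℝ) : EReal) := by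
  unfold eIntegral
  simp_rw [← EReal.coe_neg, erealToENNReal_coe]
  rw [integral_eq_lintegral_pos_part_sub_lintegral_neg_part hG,
    coe_ennreal_eq_coe_toReal hG.lintegral_lt_top.ne,
    coe_ennreal_eq_coe_toReal (Integrable.lintegral_lt_top (f := fun c => - G c) hG.neg).ne,
    EReal.coe_sub]

/-- A measurable extended function with an integrable minorant and a finite extended integral
agrees almost everywhere with an integrable real function. -/
lemma exists_integrable_of_eIntegral_lt_top {g : C → EReal} (hg : AEMeasurable g p) {H : C → ℝ}
    (hH : Integrable H p) (hHg : ∀ c, (H c : EReal) ≤ g c) (hfin : eIntegral p g < ⊤) :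
    ∃ G : C → ℝ, Integrable G p ∧ ∀ᵐ c ∂p, g c = (G c : EReal) := by
  have hm : Measurable erealToENNReal :=
    Measurable.ite (measurableSet_singleton _) measurable_const
      (measurable_ereal_toReal.ennreal_ofReal)
  have hneg : ∫⁻ c, erealToENNReal (-(g c)) ∂p ≠ ⊤ := by
    refine ne_top_of_le_ne_top
      (Integrable.lintegral_lt_top (f := fun c => - H c) hH.neg).ne (lintegral_mono fun c => ?_)
    rw [← erealToENNReal_coe]
    exact erealToENNReal_mono (by simpa using EReal.neg_le_neg_iff.mpr (hHg c))
  have hpos : ∫⁻ c, erealToENNReal (g c) ∂p ≠ ⊤ := by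
    intro h
    rw [eIntegral, h, coe_ennreal_eq_coe_toReal hneg] at hfin
    simp at hfin
  have hlt := ae_lt_top' (hm.comp_aemeasurable hg) hpos
  have hne : ∀ c, g c ≠ ⊥ := fun c h => by
    have := hHg c
    rw [h] at this
    simp at this
  have hGeq : ∀ᵐ c ∂p, g c = ((g c).toReal : EReal) := by
    filter_upwards [hlt] with c hc
    refine (EReal.coe_toReal (fun h => ?_) (hne c)).symm
    simp [erealToENNReal, h] at hc
  refine ⟨fun c => (g c).toReal, ?_, hGeq⟩
  have hI := integrable_toReal_of_lintegral_ne_top (hm.comp_aemeasurable hg) hpos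
  refine (hI.add hH.norm).mono' (measurable_ereal_toReal.comp_aemeasurable hg).aestronglyMeasurable ?_
  filter_upwards [hGeq] with c hc
  have h1 : H c ≤ (g c).toReal := by
    have := hHg c
    rw [hc] at this
    exact_mod_cast this
  have h2 : (erealToENNReal (g c)).toReal = max (g c).toReal 0 := by
    rw [hc, erealToENNReal_coe]
    simp [ENNReal.toReal_ofReal']
  simp only [Pi.add_apply, Function.comp, h2, Real.norm_eq_abs]
  rw [abs_le]
  have := neg_abs_le (H c)
  have := abs_nonneg (H c)
  have := le_max_left (g c).toReal 0
  have := le_max_right (g c).toReal 0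
  constructor <;> linarith

end Integral

/-! ### Divergence generators -/

/-- `φ` generates a divergence: it is convex and lower semicontinuous, vanishes at `1`, and is `⊤`
on the negative half-line. That `φ` never takes the value `⊥` follows; see `Gen.ne_bot`. -/
structure Gen (φ : ℝ → EReal) : Prop where
  conv : ∀ x y t : ℝ, 0 ≤ t → t ≤ 1 →
      φ (t * x + (1 - t) * y) ≤ (t : EReal) * φ x + ((1 - t : ℝ) : EReal) * φ y
  lsc : LowerSemicontinuous φ
  one : φ 1 = 0
  neg : ∀ u : ℝ, u < 0 → φ u = ⊤

/-- Properness is automatic: a value `⊥` would propagate by convexity into the negative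
half-line, where `φ` is `⊤`. -/
lemma Gen.ne_bot {φ : ℝ → EReal} (h : Gen φ) (x : ℝ) : φ x ≠ ⊥ := by
  intro hx
  have hx0 : 0 ≤ x := by
    by_contra hlt
    rw [h.neg x (not_le.mp hlt)] at hx
    exact absurd hx (by simp)
  -- the weight `t` is chosen so that `t * x + (1 - t) * (-1) = -1/2`
  have hpos : 0 < 1 / (2 * (x + 1)) := by positivity
  have hc := h.conv x (-1) (1 / (2 * (x + 1))) hpos.le (by
    rw [div_le_one (by positivity)]; linarith)
  have he : 1 / (2 * (x + 1)) * x + (1 - 1 / (2 * (x + 1))) * (-1) = -1 / 2 := by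
    field_simp; ring
  rw [he, h.neg (-1 / 2) (by norm_num), hx, EReal.coe_mul_bot_of_pos hpos] at hc
  simp at hc

/-- Convexity in terms of real upper bounds. -/
lemma Gen.conv_le {φ : ℝ → EReal} (h : Gen φ) {x y a b t : ℝ} (ht : 0 ≤ t) (ht1 : t ≤ 1)
    (hx : φ x ≤ (a : EReal)) (hy : φ y ≤ (b : EReal)) :
    φ (t * x + (1 - t) * y) ≤ ((t * a + (1 - t) * b : ℝ) : EReal) := by
  refine (h.conv x y t ht ht1).trans ?_
  rw [EReal.coe_add, EReal.coe_mul, EReal.coe_mul]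
  exact add_le_add (mul_le_mul_of_nonneg_left hx (by exact_mod_cast ht))
    (mul_le_mul_of_nonneg_left hy (by exact_mod_cast sub_nonneg.mpr ht1))

lemma Gen.nonneg_of_le {φ : ℝ → EReal} (h : Gen φ) {u a : ℝ} (hu : φ u ≤ (a : EReal)) :
    0 ≤ u := by
  by_contra hlt
  rw [h.neg u (not_le.mp hlt)] at hu
  simp at hu

/-- An affine minorant. On `[0, 2]` lower semicontinuity bounds `φ` below by some `-m`; for `u > 2`
the point `2` lies between `1` and `u`, and convexity transports the bound at `2` to `u`. -/
lemma Gen.exists_minorant {φ : ℝ → EReal} (h : Gen φ) :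
    ∃ m : ℝ, 0 ≤ m ∧ ∀ u, ((-m - m * u : ℝ) : EReal) ≤ φ u := by
  obtain ⟨a, -, ha⟩ := (h.lsc.lowerSemicontinuousOn (Set.Icc 0 2)).exists_isMinOn
    ⟨0, by simp⟩ isCompact_Icc
  have h1 : φ a ≤ 0 := h.one ▸ ha (show (1 : ℝ) ∈ Set.Icc 0 2 by constructor <;> norm_num)
  have hcoe := EReal.coe_toReal (fun hh => by simp [hh] at h1) (h.ne_bot a)
  set m := -(φ a).toReal with hm
  have hm0 : 0 ≤ m := by
    rw [← hcoe] at h1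
    have : (φ a).toReal ≤ 0 := by exact_mod_cast h1
    linarith
  have hma : φ a = ((-m : ℝ) : EReal) := by rw [hm, neg_neg, hcoe]
  refine ⟨m, hm0, fun u => ?_⟩
  by_cases ht : φ u = ⊤
  · simp [ht]
  have hu := EReal.coe_toReal ht (h.ne_bot u)
  have hu0 : 0 ≤ u := h.nonneg_of_le hu.ge
  rw [← hu]
  by_cases hu2 : u ≤ 2
  · have := ha (show u ∈ Set.Icc 0 2 from ⟨hu0, hu2⟩)
    simp only [Set.mem_ofPred_eq] at this
    rw [hma, ← hu] at this
    have h3 : -m ≤ (φ u).toReal := by exact_mod_cast this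
    have : 0 ≤ m * u := by positivity
    exact_mod_cast (by linarith : -m - m * u ≤ (φ u).toReal)
  · push Not at hu2
    have hpos : 0 < u - 1 := by linarith
    have h2 := ha (show (2 : ℝ) ∈ Set.Icc 0 2 by constructor <;> norm_num)
    simp only [Set.mem_ofPred_eq] at h2
    have h3 := h.conv_le (x := u) (y := 1) (a := (φ u).toReal) (b := 0) (t := 1 / (u - 1))
      (by positivity) (by rw [div_le_one hpos]; linarith) hu.ge (by simp [h.one])
    have he : 1 / (u - 1) * u + (1 - 1 / (u - 1)) * 1 = 2 := by field_simp; ring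
    rw [he] at h3
    have h4 := h2.trans h3
    rw [hma] at h4
    have h5 : -m ≤ 1 / (u - 1) * (φ u).toReal + (1 - 1 / (u - 1)) * 0 := by exact_mod_cast h4
    have h6 : -m * (u - 1) ≤ (φ u).toReal := by
      have := mul_le_mul_of_nonneg_right h5 hpos.le
      field_simp at this
      linarith
    exact_mod_cast (by nlinarith : -m - m * u ≤ (φ u).toReal)

/-! ### Admissible densities -/

section Duality

variable {C : Type*} [MeasurableSpace C] {p : Measure C}

/-- A real-valued, non-normalised competitor in the primal problem: an integrable density `r`
with an integrable real majorant `T` of `φ ∘ r`. Carrying `T` along keeps the Lagrangian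
and the separation argument inside real-valued integrals. -/
structure Adm (p : Measure C) (φ : ℝ → EReal) (r T : C → ℝ) : Prop where
  meas : Measurable r
  int : Integrable r p
  intT : Integrable T p
  le : ∀ c, φ (r c) ≤ (T c : EReal)

lemma adm_const [IsFiniteMeasure p] {φ : ℝ → EReal} {u a : ℝ} (h : φ u ≤ (a : EReal)) :
    Adm p φ (fun _ => u) (fun _ => a) :=
  ⟨measurable_const, integrable_const _, integrable_const _, fun _ => h⟩

lemma Adm.mix {φ : ℝ → EReal} (hφ : Gen φ) {r T r' T' : C → ℝ} (h : Adm p φ r T)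
    (h' : Adm p φ r' T') {t : ℝ} (ht : 0 ≤ t) (ht1 : t ≤ 1) :
    Adm p φ (fun c => t * r c + (1 - t) * r' c) (fun c => t * T c + (1 - t) * T' c) :=
  ⟨(h.meas.const_mul _).add (h'.meas.const_mul _),
    (h.int.const_mul _).add (h'.int.const_mul _),
    (h.intT.const_mul _).add (h'.intT.const_mul _),
    fun c => hφ.conv_le ht ht1 (h.le c) (h'.le c)⟩

lemma integrable_bdd_mul {f : C → ℝ} (hf : Measurable f) {M : ℝ} (hfM : ∀ c, |f c| ≤ M)
    {g : C → ℝ} (hg : Integrable g p) : Integrable (fun c => f c * g c) p :=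
  hg.bdd_mul hf.aestronglyMeasurable (ae_of_all _ hfM)

lemma abs_integral_bdd_mul_le {f : C → ℝ} {M : ℝ} (hfM : ∀ c, |f c| ≤ M)
    {g : C → ℝ} (hg : Integrable g p) : |∫ c, f c * g c ∂p| ≤ M * ∫ c, |g c| ∂p := by
  rw [← integral_const_mul]
  refine (norm_integral_le_integral_norm (μ := p) (fun c => f c * g c)).trans ?_
  refine integral_mono_of_nonneg (ae_of_all _ fun c => norm_nonneg _)
    (hg.abs.const_mul M) (ae_of_all _ fun c => ?_)
  simp only [norm_mul, Real.norm_eq_abs]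
  exact mul_le_mul_of_nonneg_right (hfM c) (abs_nonneg _)

lemma integral_lin {g h : C → ℝ} (hg : Integrable g p) (hh : Integrable h p) (a b : ℝ) :
    ∫ c, (a * g c + b * h c) ∂p = a * ∫ c, g c ∂p + b * ∫ c, h c ∂p := by
  rw [integral_add (hg.const_mul a) (hh.const_mul b), integral_const_mul, integral_const_mul]

/-- The primal value is lower semicontinuous in the total mass at mass `1`, approached from the
side selected by the sign `σ`. If the domain of `φ` reaches beyond `1` on the opposite side,
mixing with a constant density restores unit mass at small cost; otherwise every competitor
lies on one side of `1`, so nearly unit mass forces it to be close to `1` in `L¹`. -/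
lemma near_feasible_side [IsProbabilityMeasure p] {φ : ℝ → EReal} (hφ : Gen φ)
    {f : C → ℝ} (hf : Measurable f) {M : ℝ} (hM : 0 ≤ M) (hfM : ∀ c, |f c| ≤ M)
    {ε P δ : ℝ} (hε : 0 < ε) (hδ : 0 < δ)
    (hP : ∀ r T, Adm p φ r T → ∫ c, r c ∂p = 1 → ∫ c, T c ∂p ≤ ε → P ≤ ∫ c, f c * r c ∂p)
    (σ : ℝ) (hσ : σ = 1 ∨ σ = -1) :
    ∃ η > 0, ∀ r T, Adm p φ r T → 0 ≤ σ * (1 - ∫ c, r c ∂p) → σ * (1 - ∫ c, r c ∂p) < η →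
      ∫ c, T c ∂p < ε → P - δ ≤ ∫ c, f c * r c ∂p := by
  have hF : |∫ c, f c * 1 ∂p| ≤ M := by
    simpa using abs_integral_bdd_mul_le (p := p) hfM (integrable_const (1 : ℝ))
  by_cases hw : ∃ w, 0 < σ * (w - 1) ∧ φ w ≠ ⊤
  · obtain ⟨w₀, hw₀, hw₀t⟩ := hw
    -- a point of the domain so close to `1` that `φ ≤ ε` there
    obtain ⟨w, hw, hwε⟩ : ∃ w, 0 < σ * (w - 1) ∧ φ w ≤ (ε : EReal) := by
      set a := (φ w₀).toReal
      have ha := (EReal.coe_toReal hw₀t (hφ.ne_bot w₀)).ge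
      have hpos : 0 < |a| + ε := by positivity
      refine ⟨ε / (|a| + ε) * w₀ + (1 - ε / (|a| + ε)) * 1, ?_, ?_⟩
      · have : 0 < ε / (|a| + ε) * (σ * (w₀ - 1)) := by positivity
        linarith
      · refine (hφ.conv_le (by positivity)
          (by rw [div_le_one hpos]; linarith [abs_nonneg a]) ha
          (b := 0) (by simp [hφ.one])).trans ?_
        have h1 : ε / (|a| + ε) * a ≤ ε := by
          rw [div_mul_eq_mul_div, div_le_iff₀ hpos]
          nlinarith [le_abs_self a]
        exact_mod_cast (by linarith : _ ≤ ε)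
    have hw0 : 0 ≤ w := hφ.nonneg_of_le hwε
    set κ := σ * (w - 1)
    have hB : 0 < (2 + w) * M + 1 := by positivity
    refine ⟨min 1 (κ * δ / ((2 + w) * M + 1)), lt_min one_pos (by positivity), ?_⟩
    intro r T hA h0 hη hT
    set s := ∫ c, r c ∂p with hs
    set X := ∫ c, f c * r c ∂p with hX
    have hr0 : ∀ c, 0 ≤ r c := fun c => hφ.nonneg_of_le (hA.le c)
    have hs2 : s ≤ 2 := by
      have := hη.trans_le (min_le_left _ _)
      rcases hσ with rfl | rfl <;> linarith
    have hXb : |X| ≤ M * s := by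
      have := abs_integral_bdd_mul_le (p := p) hfM hA.int
      simpa only [abs_of_nonneg (hr0 _)] using this
    have hXb2 : -X ≤ 2 * M := by
      have := neg_le_abs X
      nlinarith
    have hden : 0 < σ * (1 - s) + κ := by positivity
    set θ := σ * (1 - s) / (σ * (1 - s) + κ) with hθ
    have hθ0 : 0 ≤ θ := by positivity
    have hθ1 : θ ≤ 1 := by rw [hθ, div_le_one hden]; linarith
    have hθη : θ * ((2 + w) * M) ≤ δ := by
      have h1 : θ * κ ≤ σ * (1 - s) := by
        rw [hθ, div_mul_eq_mul_div, div_le_iff₀ hden]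
        nlinarith
      have h2 := hη.trans_le (min_le_right _ _)
      rw [lt_div_iff₀ hB] at h2
      have h3 : θ * κ * ((2 + w) * M + 1) ≤ κ * δ :=
        (mul_le_mul_of_nonneg_right h1 hB.le).trans h2.le
      have h4 : θ * ((2 + w) * M + 1) ≤ δ := by
        refine le_of_mul_le_mul_left ?_ hw
        linarith
      linarith
    have hmass : θ * w + (1 - θ) * s = 1 := by
      have : θ * (σ * (1 - s) + κ) = σ * (1 - s) := div_mul_cancel₀ _ hden.ne'
      have h2 : σ * (θ * w + (1 - θ) * s - 1) = 0 := by
        simp only [κ] at this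
        linarith
      have hσ0 : σ ≠ 0 := by rcases hσ with rfl | rfl <;> norm_num
      have := (mul_eq_zero.mp h2).resolve_left hσ0
      linarith
    have hmix := (adm_const (p := p) hwε).mix hφ hA hθ0 hθ1
    have key := hP _ _ hmix
      (by rw [integral_lin (integrable_const w) hA.int]; simpa using hmass)
      (by
        rw [integral_lin (integrable_const ε) hA.intT]
        simp only [integral_const, probReal_univ, one_smul]
        nlinarith)
    have he : ∫ c, f c * (θ * w + (1 - θ) * r c) ∂p
        = θ * w * ∫ c, f c * 1 ∂p + (1 - θ) * X := by
      rw [hX, ← integral_lin (integrable_bdd_mul hf hfM (integrable_const 1))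
        (integrable_bdd_mul hf hfM hA.int)]
      congr 1; ext c; ring
    rw [he] at key
    have h5 : θ * w * ∫ c, f c * 1 ∂p ≤ θ * w * M :=
      mul_le_mul_of_nonneg_left ((le_abs_self _).trans hF) (by positivity)
    have h6 : θ * -X ≤ θ * (2 * M) := mul_le_mul_of_nonneg_left hXb2 hθ0
    linarith
  · push Not at hw
    refine ⟨δ / (M + 1), by positivity, ?_⟩
    intro r T hA h0 hη hT
    have hside : ∀ c, |r c - 1| = σ * (1 - r c) := by
      intro c
      have h1 : 0 ≤ σ * (1 - r c) := by
        by_contra hneg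
        have h2 := hw (r c) (by linarith)
        have h3 := hA.le c
        rw [h2] at h3
        simp at h3
      rcases hσ with rfl | rfl
      · rw [abs_of_nonpos (by linarith)]; ring
      · rw [abs_of_nonneg (by linarith)]; ring
    have h1 := abs_integral_bdd_mul_le (p := p) hfM (hA.int.sub (integrable_const (1 : ℝ)))
    simp only [Pi.sub_apply, hside] at h1
    rw [integral_const_mul, integral_sub (integrable_const _) hA.int] at h1
    have h2 : ∫ c, f c * (r c - 1) ∂p = ∫ c, f c * r c ∂p - ∫ c, f c * 1 ∂p := by
      rw [← integral_sub (integrable_bdd_mul hf hfM hA.int)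
        (integrable_bdd_mul hf hfM (integrable_const 1))]
      congr 1; ext c; ring
    rw [h2] at h1
    simp only [integral_const, probReal_univ, one_smul] at h1
    have h3 := hP (fun _ => 1) (fun _ => 0) (adm_const (by simp [hφ.one])) (by simp)
      (by simpa using hε.le)
    rw [lt_div_iff₀ (by positivity)] at hη
    have h4 := (abs_le.mp h1).1
    nlinarith

lemma near_feasible [IsProbabilityMeasure p] {φ : ℝ → EReal} (hφ : Gen φ)
    {f : C → ℝ} (hf : Measurable f) {M : ℝ} (hM : 0 ≤ M) (hfM : ∀ c, |f c| ≤ M)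
    {ε P δ : ℝ} (hε : 0 < ε) (hδ : 0 < δ)
    (hP : ∀ r T, Adm p φ r T → ∫ c, r c ∂p = 1 → ∫ c, T c ∂p ≤ ε → P ≤ ∫ c, f c * r c ∂p) :
    ∃ η > 0, ∀ r T, Adm p φ r T → |∫ c, r c ∂p - 1| < η →
      ∫ c, T c ∂p < ε → P - δ ≤ ∫ c, f c * r c ∂p := by
  obtain ⟨η₁, h1, H1⟩ := near_feasible_side hφ hf hM hfM hε hδ hP 1 (Or.inl rfl)
  obtain ⟨η₂, h2, H2⟩ := near_feasible_side hφ hf hM hfM hε hδ hP (-1) (Or.inr rfl)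
  refine ⟨min η₁ η₂, lt_min h1 h2, fun r T hA hη hT => ?_⟩
  have ha := abs_lt.mp (hη.trans_le (min_le_left _ _))
  have hb := abs_lt.mp (hη.trans_le (min_le_right _ _))
  rcases le_total (∫ c, r c ∂p) 1 with h | h
  · exact H1 r T hA (by linarith) (by linarith) hT
  · exact H2 r T hA (by linarith) (by linarith) hT

/-! ### Multipliers -/

lemma nonneg_of_forall_gt {k x₀ A B : ℝ} (h : ∀ x > x₀, A < k * x + B) : 0 ≤ k := by
  by_contra hneg
  push Not at hneg
  have h1 : 0 ≤ |k * (x₀ + 1) + B - A| / (-k) := div_nonneg (abs_nonneg _) (by linarith)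
  have h2 := h (x₀ + 1 + |k * (x₀ + 1) + B - A| / (-k)) (by linarith)
  have h3 : k * (|k * (x₀ + 1) + B - A| / (-k)) = -|k * (x₀ + 1) + B - A| := by
    rw [div_neg, mul_neg, mul_div_cancel₀ _ hneg.ne]
  have := le_abs_self (k * (x₀ + 1) + B - A)
  linarith

/-- Nonnegative multiplier `lam` by separating the epigraph-type set of attainable
(objective, divergence, mass) triples, thickened in the mass direction, from the point
`(P - δ, ε, 1)`. -/
lemma exists_multiplier_nonneg [IsProbabilityMeasure p] {φ : ℝ → EReal} (hφ : Gen φ)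
    {f : C → ℝ} (hf : Measurable f) {M : ℝ} (hM : 0 ≤ M) (hfM : ∀ c, |f c| ≤ M)
    {ε P δ : ℝ} (hε : 0 < ε) (hδ : 0 < δ)
    (hP : ∀ r T, Adm p φ r T → ∫ c, r c ∂p = 1 → ∫ c, T c ∂p ≤ ε → P ≤ ∫ c, f c * r c ∂p) :
    ∃ lam b : ℝ, 0 ≤ lam ∧ ∀ r T, Adm p φ r T →
      P - δ + lam * ε - b ≤
        ∫ c, f c * r c ∂p + lam * ∫ c, T c ∂p - b * ∫ c, r c ∂p := by
  obtain ⟨η, hη, H⟩ := near_feasible hφ hf hM hfM hε hδ hP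
  let S : Set (ℝ × ℝ × ℝ) := {z | ∃ r T, Adm p φ r T ∧ ∫ c, f c * r c ∂p < z.1 ∧
    ∫ c, T c ∂p < z.2.1 ∧ |∫ c, r c ∂p - z.2.2| < η}
  have hSo : IsOpen S := by
    have : S = ⋃ (r : C → ℝ) (T : C → ℝ) (_ : Adm p φ r T), {z | ∫ c, f c * r c ∂p < z.1 ∧
        ∫ c, T c ∂p < z.2.1 ∧ |∫ c, r c ∂p - z.2.2| < η} := by
      ext z; simp only [S, Set.mem_iUnion, Set.mem_ofPred_eq, exists_prop]
    rw [this]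
    refine isOpen_iUnion fun r => isOpen_iUnion fun T => isOpen_iUnion fun _ => ?_
    have c1 : Continuous fun z : ℝ × ℝ × ℝ => z.2.1 := by fun_prop
    have c2 : Continuous fun z : ℝ × ℝ × ℝ => |∫ c, r c ∂p - z.2.2| := by fun_prop
    exact (isOpen_lt continuous_const continuous_fst).inter
      ((isOpen_lt continuous_const c1).inter (isOpen_lt c2 continuous_const))
  have hSc : Convex ℝ S := by
    rintro z ⟨r, T, hA, h1, h2, h3⟩ z' ⟨r', T', hA', h1', h2', h3'⟩ t t' ht ht' htt
    obtain rfl : t' = 1 - t := by linarith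
    have e1 : ∫ c, f c * (t * r c + (1 - t) * r' c) ∂p
        = t * ∫ c, f c * r c ∂p + (1 - t) * ∫ c, f c * r' c ∂p := by
      rw [← integral_lin (integrable_bdd_mul hf hfM hA.int) (integrable_bdd_mul hf hfM hA'.int)]
      congr 1; ext c; ring
    refine ⟨_, _, hA.mix hφ hA' ht (by linarith), ?_, ?_, ?_⟩
    · rw [e1]
      simp only [Prod.fst_add, Prod.smul_fst, smul_eq_mul]
      rcases ht.eq_or_lt with rfl | ht
      · simpa using h1'
      · nlinarith
    · rw [integral_lin hA.intT hA'.intT]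
      simp only [Prod.fst_add, Prod.smul_fst, Prod.snd_add, Prod.smul_snd, smul_eq_mul]
      rcases ht.eq_or_lt with rfl | ht
      · simpa using h2'
      · nlinarith
    · rw [integral_lin hA.int hA'.int]
      simp only [Prod.snd_add, Prod.smul_snd, smul_eq_mul]
      rw [abs_lt] at h3 h3' ⊢
      rcases ht.eq_or_lt with rfl | ht
      · simpa using h3'
      · constructor <;> nlinarith
  have hzS : (P - δ, ε, (1 : ℝ)) ∉ S := by
    rintro ⟨r, T, hA, h1, h2, h3⟩
    exact absurd (H r T hA h3 h2) (not_le.mpr h1)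
  obtain ⟨ℓ, hℓ⟩ := geometric_hahn_banach_open_point hSc hSo hzS
  set μ := -ℓ (1, 0, 0) with hμ
  set ν := -ℓ (0, 1, 0) with hν
  set β := -ℓ (0, 0, 1) with hβ
  have hdec : ∀ x a s : ℝ, ℓ (x, a, s) = -(μ * x + ν * a + β * s) := by
    intro x a s
    have : ((x, a, s) : ℝ × ℝ × ℝ) = x • (1, 0, 0) + a • (0, 1, 0) + s • (0, 0, 1) := by
      ext <;> simp
    rw [this]
    simp only [map_add, map_smul, smul_eq_mul, hμ, hν, hβ]
    ring
  have key : ∀ r T, Adm p φ r T → ∀ x > ∫ c, f c * r c ∂p, ∀ a > ∫ c, T c ∂p,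
      μ * (P - δ) + ν * ε + β < μ * x + ν * a + β * ∫ c, r c ∂p := by
    intro r T hA x hx a ha
    have := hℓ (x, a, ∫ c, r c ∂p) ⟨r, T, hA, hx, ha, by simpa using hη⟩
    rw [hdec, hdec] at this
    linarith
  have key1 : ∀ x > ∫ c, f c * 1 ∂p, ∀ a > 0, μ * (P - δ) + ν * ε < μ * x + ν * a := by
    intro x hx a ha
    have := key (fun _ => 1) (fun _ => 0) (adm_const (by simp [hφ.one])) x hx a (by simpa using ha)
    simp at this
    linarith
  set F := ∫ c, f c * 1 ∂p
  have hμ0 : 0 ≤ μ := nonneg_of_forall_gt fun x hx => key1 x hx 1 one_pos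
  have hν0 : 0 ≤ ν := nonneg_of_forall_gt (x₀ := 0) (A := μ * (P - δ) + ν * ε) (B := μ * (F + 1))
    fun a ha => by
      have := key1 (F + 1) (by linarith) a ha
      linarith
  -- the density `1` is strictly feasible, so the hyperplane is not vertical
  have hμpos : 0 < μ := by
    refine hμ0.lt_of_ne fun h => ?_
    have := key1 (F + 1) (by linarith) (ε / 2) (by linarith)
    rw [← h] at this
    nlinarith
  refine ⟨ν / μ, -(β / μ), by positivity, fun r T hA => ?_⟩
  have hlim : μ * (P - δ) + ν * ε + β ≤
      μ * ∫ c, f c * r c ∂p + ν * ∫ c, T c ∂p + β * ∫ c, r c ∂p := by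
    refine le_of_forall_pos_le_add fun e he => ?_
    have hd : 0 < μ + ν := by linarith
    have hq : 0 < e / (μ + ν) := by positivity
    have := key r T hA (∫ c, f c * r c ∂p + e / (μ + ν)) (lt_add_of_pos_right _ hq)
      (∫ c, T c ∂p + e / (μ + ν)) (lt_add_of_pos_right _ hq)
    have h2 : (μ + ν) * (e / (μ + ν)) = e := mul_div_cancel₀ _ hd.ne'
    linarith
  refine le_of_mul_le_mul_left ?_ hμpos
  have e1 : μ * (P - δ + ν / μ * ε - -(β / μ)) = μ * (P - δ) + ν * ε + β := by field_simp; ring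
  have e2 : μ * (∫ c, f c * r c ∂p + ν / μ * ∫ c, T c ∂p - -(β / μ) * ∫ c, r c ∂p)
      = μ * ∫ c, f c * r c ∂p + ν * ∫ c, T c ∂p + β * ∫ c, r c ∂p := by field_simp; ring
  rw [e1, e2]
  exact hlim

/-- A strictly positive multiplier: raising `lam` by a small `τ` while lowering `b` by `τ * m`
costs at most a multiple of `τ`, since `φ u + m * u` is bounded below. Positivity matters
because `0 * φ` is the zero function, not the indicator of the domain of `φ`. -/
lemma exists_multiplier_pos [IsProbabilityMeasure p] {φ : ℝ → EReal} (hφ : Gen φ)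
    {f : C → ℝ} (hf : Measurable f) {M : ℝ} (hM : 0 ≤ M) (hfM : ∀ c, |f c| ≤ M)
    {ε P δ : ℝ} (hε : 0 < ε) (hδ : 0 < δ)
    (hP : ∀ r T, Adm p φ r T → ∫ c, r c ∂p = 1 → ∫ c, T c ∂p ≤ ε → P ≤ ∫ c, f c * r c ∂p) :
    ∃ lam b : ℝ, 0 < lam ∧ ∀ r T, Adm p φ r T →
      P - δ + lam * ε - b ≤
        ∫ c, f c * r c ∂p + lam * ∫ c, T c ∂p - b * ∫ c, r c ∂p := by
  obtain ⟨lam, b, hl, H⟩ := exists_multiplier_nonneg hφ hf hM hfM hε (half_pos hδ) hP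
  obtain ⟨m, hm, Hm⟩ := hφ.exists_minorant
  set τ := δ / 2 / (2 * m + ε) with hτ
  have hτ0 : 0 < τ := by positivity
  have hτe : τ * (2 * m + ε) = δ / 2 := div_mul_cancel₀ _ (by positivity)
  refine ⟨lam + τ, b - τ * m, by linarith, fun r T hA => ?_⟩
  have h1 := H r T hA
  have h2 : -m ≤ ∫ c, T c ∂p + m * ∫ c, r c ∂p := by
    have h3 : ∫ c, (-m : ℝ) ∂p ≤ ∫ c, (1 * T c + m * r c) ∂p := by
      refine integral_mono (integrable_const _) ((hA.intT.const_mul 1).add (hA.int.const_mul m))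
        fun c => ?_
      have : -m - m * r c ≤ T c := by exact_mod_cast (Hm (r c)).trans (hA.le c)
      show -m ≤ 1 * T c + m * r c
      linarith
    rw [integral_lin hA.intT hA.int] at h3
    simpa using h3
  have h4 := mul_le_mul_of_nonneg_left h2 hτ0.le
  linarith

/-! ### Integrating the conjugate -/

/-- Greedy measurable selection: among `(1, 0)` and the first `n` points `(u, t)` of the sequence
`d`, one maximising `y c * u - lam * t`. -/
noncomputable def sel (y : C → ℝ) (lam : ℝ) (d : ℕ → ℝ × ℝ) : ℕ → C → ℝ × ℝ
  | 0, _ => (1, 0)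
  | n + 1, c =>
    if y c * (sel y lam d n c).1 - lam * (sel y lam d n c).2 < y c * (d n).1 - lam * (d n).2
    then d n else sel y lam d n c

lemma sel_measurable {y : C → ℝ} (hy : Measurable y) (lam : ℝ) (d : ℕ → ℝ × ℝ) (n : ℕ) :
    Measurable (sel y lam d n) := by
  induction n with
  | zero => exact measurable_const
  | succ n ih =>
    exact Measurable.ite (measurableSet_lt ((hy.mul ih.fst).sub (ih.snd.const_mul _))
      ((hy.mul_const _).sub_const _)) measurable_const ih

lemma sel_bounded {C : Type*} (y : C → ℝ) (lam : ℝ) (d : ℕ → ℝ × ℝ) (n : ℕ) :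
    ∃ B, ∀ c, ‖sel y lam d n c‖ ≤ B := by
  induction n with
  | zero => exact ⟨‖((1, 0) : ℝ × ℝ)‖, fun c => le_rfl⟩
  | succ n ih =>
    obtain ⟨B, hB⟩ := ih
    refine ⟨max B ‖d n‖, fun c => ?_⟩
    rw [sel]
    split_ifs
    · exact le_max_right _ _
    · exact (hB c).trans (le_max_left _ _)

lemma sel_mono {C : Type*} (y : C → ℝ) (lam : ℝ) (d : ℕ → ℝ × ℝ) (c : C) :
    Monotone fun n => y c * (sel y lam d n c).1 - lam * (sel y lam d n c).2 := by
  refine monotone_nat_of_le_succ fun n => ?_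
  simp only [sel]
  split_ifs with h
  · exact h.le
  · exact le_rfl

lemma le_sel_succ {C : Type*} (y : C → ℝ) (lam : ℝ) (d : ℕ → ℝ × ℝ) (n : ℕ) (c : C) :
    y c * (d n).1 - lam * (d n).2 ≤
      y c * (sel y lam d (n + 1) c).1 - lam * (sel y lam d (n + 1) c).2 := by
  simp only [sel]
  split_ifs with h
  · exact le_rfl
  · exact not_lt.mp h

lemma sel_adm [IsProbabilityMeasure p] {φ : ℝ → EReal} (hφ : Gen φ) {y : C → ℝ}
    (hy : Measurable y) (lam : ℝ) {d : ℕ → ℝ × ℝ}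
    (hd : ∀ n, φ (d n).1 ≤ ((d n).2 : EReal)) (n : ℕ) :
    Adm p φ (fun c => (sel y lam d n c).1) (fun c => (sel y lam d n c).2) := by
  have hm := sel_measurable hy lam d n
  obtain ⟨B, hB⟩ := sel_bounded y lam d n
  refine ⟨hm.fst, Integrable.of_bound hm.fst.aestronglyMeasurable B
      (ae_of_all _ fun c => (norm_fst_le _).trans (hB c)),
    Integrable.of_bound hm.snd.aestronglyMeasurable B
      (ae_of_all _ fun c => (norm_snd_le _).trans (hB c)), fun c => ?_⟩
  clear hm hB
  induction n with
  | zero => simp [sel, hφ.one]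
  | succ n ih =>
    rw [sel]
    split_ifs
    · exact hd n
    · exact ih

/-- Integral and pointwise supremum may be exchanged: a bound on `∫ (y * r - lam * T)` over all
admissible pairs bounds the integral of the conjugate of `lam * φ` at `y`. The conjugate is the
increasing limit of the maxima over finitely many points of a countable dense subset of the
epigraph of `φ`, and these maxima are attained by admissible pairs. -/
lemma eIntegral_conj_le [IsProbabilityMeasure p] {φ : ℝ → EReal} (hφ : Gen φ) {y : C → ℝ}
    (hy : Measurable y) {B : ℝ} (hyB : ∀ c, |y c| ≤ B) {lam : ℝ} (hl : 0 < lam) {K : ℝ}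
    (hK : ∀ r T, Adm p φ r T → ∫ c, (y c * r c - lam * T c) ∂p ≤ K) :
    eIntegral p (fun c => ⨆ u : ℝ, ((y c * u : ℝ) : EReal) - (lam : EReal) * φ u)
      ≤ (K : EReal) := by
  let E : Set (ℝ × ℝ) := {z | φ z.1 ≤ (z.2 : EReal)}
  have : Nonempty E := ⟨⟨(1, 0), by simp [E, hφ.one]⟩⟩
  let d : ℕ → ℝ × ℝ := fun n => (TopologicalSpace.denseSeq E n : ℝ × ℝ)
  have hd : ∀ n, φ (d n).1 ≤ ((d n).2 : EReal) := fun n => (TopologicalSpace.denseSeq E n).2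
  let V : ℕ → C → ℝ := fun n c => y c * (sel y lam d n c).1 - lam * (sel y lam d n c).2
  have hVm : ∀ n, Measurable (V n) := fun n =>
    (hy.mul (sel_measurable hy lam d n).fst).sub ((sel_measurable hy lam d n).snd.const_mul _)
  have hVi : ∀ n, Integrable (V n) p := fun n =>
    (integrable_bdd_mul hy hyB (sel_adm hφ hy lam hd n).int).sub
      ((sel_adm hφ hy lam hd n).intT.const_mul _)
  have hVmono : ∀ c, Monotone fun n => V n c := sel_mono y lam d
  have hVK : ∀ n, ∫ c, V n c ∂p ≤ K := fun n => hK _ _ (sel_adm hφ hy lam hd n)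
  let h : ℕ → C → ℝ≥0∞ := fun n c => ENNReal.ofReal (V n c - V 0 c)
  have hhm : ∀ n, Measurable (h n) := fun n => ((hVm n).sub (hVm 0)).ennreal_ofReal
  have hhmono : Monotone h := fun m n hmn c =>
    ENNReal.ofReal_le_ofReal (sub_le_sub_right (hVmono c hmn) _)
  have hlint : ∫⁻ c, ⨆ n, h n c ∂p ≤ ENNReal.ofReal (K - ∫ c, V 0 c ∂p) := by
    rw [lintegral_iSup hhm hhmono]
    refine iSup_le fun n => ?_
    rw [← ofReal_integral_eq_lintegral_ofReal (f := fun c => V n c - V 0 c) ((hVi n).sub (hVi 0))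
      (ae_of_all _ fun c => sub_nonneg.mpr (hVmono c (Nat.zero_le n))),
      integral_sub (hVi n) (hVi 0)]
    exact ENNReal.ofReal_le_ofReal (sub_le_sub_right (hVK n) _)
  have hfin : ∫⁻ c, ⨆ n, h n c ∂p ≠ ⊤ := ne_top_of_le_ne_top ENNReal.ofReal_ne_top hlint
  have hsm : Measurable fun c => ⨆ n, h n c := Measurable.iSup hhm
  have hae := ae_lt_top hsm hfin
  have hHi := integrable_toReal_of_lintegral_ne_top hsm.aemeasurable hfin
  have hHint : ∫ c, (⨆ n, h n c).toReal ∂p ≤ K - ∫ c, V 0 c ∂p := by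
    rw [integral_toReal hsm.aemeasurable hae]
    exact ENNReal.toReal_le_of_le_ofReal (sub_nonneg.mpr (hVK 0)) hlint
  have hle : ∀ᵐ c ∂p, (⨆ u : ℝ, ((y c * u : ℝ) : EReal) - (lam : EReal) * φ u) ≤
      (((⨆ n, h n c).toReal + V 0 c : ℝ) : EReal) := by
    filter_upwards [hae] with c hc
    set G := (⨆ n, h n c).toReal + V 0 c
    have hVG : ∀ n, V n c ≤ G := by
      intro n
      have h1 : h n c ≤ ⨆ n, h n c := le_iSup (fun n => h n c) n
      have h2 := ENNReal.toReal_mono hc.ne h1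
      rw [ENNReal.toReal_ofReal (sub_nonneg.mpr (hVmono c (Nat.zero_le n)))] at h2
      linarith
    have hEG : ∀ z : E, y c * z.1.1 - lam * z.1.2 ≤ G := by
      have hcl : IsClosed {z : E | y c * z.1.1 - lam * z.1.2 ≤ G} :=
        isClosed_le (by fun_prop) continuous_const
      intro z
      exact hcl.closure_subset_iff.mpr
        (by rintro _ ⟨n, rfl⟩; exact (le_sel_succ y lam d n c).trans (hVG (n + 1)))
        (TopologicalSpace.denseRange_denseSeq E z)
    refine iSup_le fun u => ?_
    by_cases hu : φ u = ⊤
    · rw [hu, EReal.coe_mul_top_of_pos hl]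
      simp
    · have hcoe := EReal.coe_toReal hu (hφ.ne_bot u)
      have := hEG ⟨(u, (φ u).toReal), hcoe.ge⟩
      rw [← hcoe, ← EReal.coe_mul, ← EReal.coe_sub]
      exact_mod_cast this
  refine (eIntegral_mono hle).trans ?_
  rw [eIntegral_coe (G := fun c => (⨆ n, h n c).toReal + V 0 c) (hHi.add (hVi 0)),
    integral_add hHi (hVi 0)]
  exact_mod_cast (by linarith)

/-! ### The two inequalities -/

lemma integrable_lagrangian [IsProbabilityMeasure p] {f : C → ℝ} (hf : Measurable f) {M : ℝ}
    (hfM : ∀ c, |f c| ≤ M) {r T : C → ℝ} (hr : Integrable r p) (hT : Integrable T p) (lam b : ℝ) :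
    Integrable (fun c => (b - f c) * r c - lam * T c) p :=
  (integrable_bdd_mul (hf.const_sub b) (M := |b| + M)
    (fun c => (abs_sub _ _).trans (by linarith [hfM c])) hr).sub (hT.const_mul lam)

lemma integral_lagrangian [IsProbabilityMeasure p] {f : C → ℝ} (hf : Measurable f) {M : ℝ}
    (hfM : ∀ c, |f c| ≤ M) {r T : C → ℝ} (hr : Integrable r p) (hT : Integrable T p) (lam b : ℝ) :
    ∫ c, ((b - f c) * r c - lam * T c) ∂p
      = b * ∫ c, r c ∂p - ∫ c, f c * r c ∂p - lam * ∫ c, T c ∂p := by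
  have h := integrable_bdd_mul hf hfM hr
  rw [← integral_const_mul, ← integral_const_mul, ← integral_sub (hr.const_mul b) h,
    ← integral_sub (f := fun c => b * r c - f c * r c) ((hr.const_mul b).sub h)
      (hT.const_mul lam)]
  congr 1; ext c; ring

/-- Weak duality, from the Fenchel-Young inequality applied to the density `dq/dp`. -/
lemma weak_duality [IsProbabilityMeasure p] {φ : ℝ → EReal} (hφ : Gen φ)
    {f : C → ℝ} (hf : Measurable f) {M : ℝ} (hfM : ∀ c, |f c| ≤ M) {ε : ℝ}
    {q : Measure C} [IsProbabilityMeasure q] (hq : fDiv φ q p ≤ (ε : EReal))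
    {lam : ℝ} (hl : 0 ≤ lam) (b : ℝ) :
    (b : EReal) - (lam : EReal) * (ε : EReal) - eIntegral p (fun c =>
        ⨆ u : ℝ, (((b - f c) * u : ℝ) : EReal) - (lam : EReal) * φ u) ≤
      ((∫ c, f c ∂q : ℝ) : EReal) := by
  have hac : q ≪ p := by
    by_contra hn
    simp [fDiv, hn] at hq
  rw [fDiv, if_pos hac] at hq
  set r : C → ℝ := fun c => (q.rnDeriv p c).toReal with hr
  have hri : Integrable r p := Measure.integrable_toReal_rnDeriv
  obtain ⟨m, -, hm⟩ := hφ.exists_minorant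
  obtain ⟨G, hG, hGe⟩ := exists_integrable_of_eIntegral_lt_top
    (hφ.lsc.measurable.comp_aemeasurable hri.aemeasurable)
    ((integrable_const (-m)).sub (hri.const_mul m)) (fun c => hm (r c))
    (hq.trans_lt (EReal.coe_lt_top ε))
  have hGε : ∫ c, G c ∂p ≤ ε := by
    have h1 := (eIntegral_mono (hGe.mono fun c hc => hc.ge)).trans hq
    rw [eIntegral_coe hG] at h1
    exact_mod_cast h1
  have hfr : ∫ c, f c * r c ∂p = ∫ c, f c ∂q := by
    rw [← integral_rnDeriv_smul hac]
    congr 1; ext c; simp [hr, mul_comm]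
  have hr1 : ∫ c, r c ∂p = 1 := by
    have := integral_rnDeriv_smul (μ := q) (ν := p) hac (f := fun _ => (1 : ℝ))
    simpa [hr] using this
  have hmono : ∀ᵐ c ∂p, (((b - f c) * r c - lam * G c : ℝ) : EReal) ≤
      ⨆ u : ℝ, (((b - f c) * u : ℝ) : EReal) - (lam : EReal) * φ u := by
    filter_upwards [hGe] with c hc
    refine le_trans (le_of_eq ?_)
      (le_iSup (fun u : ℝ => (((b - f c) * u : ℝ) : EReal) - (lam : EReal) * φ u) (r c))
    simp only [Function.comp] at hc
    simp only [hc]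
    rw [← EReal.coe_mul, ← EReal.coe_sub]
  have hI := eIntegral_mono hmono
  rw [eIntegral_coe (integrable_lagrangian hf hfM hri hG lam b),
    integral_lagrangian hf hfM hri hG lam b, hfr, hr1] at hI
  refine (EReal.sub_le_sub le_rfl hI).trans ?_
  have := mul_le_mul_of_nonneg_left hGε hl
  exact_mod_cast (by linarith :
    b - lam * ε - (b * 1 - ∫ c, f c ∂q - lam * ∫ c, G c ∂p) ≤ ∫ c, f c ∂q)

/-- A normalised admissible pair is the density of a feasible probability measure. -/
lemma Adm.exists_measure [IsProbabilityMeasure p] {φ : ℝ → EReal} (hφ : Gen φ) {r T : C → ℝ}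
    (hA : Adm p φ r T) {ε : ℝ} (h1 : ∫ c, r c ∂p = 1) (hT : ∫ c, T c ∂p ≤ ε) (f : C → ℝ) :
    ∃ q : Measure C, IsProbabilityMeasure q ∧ fDiv φ q p ≤ (ε : EReal) ∧
      ∫ c, f c ∂q = ∫ c, f c * r c ∂p := by
  have hr0 : ∀ c, 0 ≤ r c := fun c => hφ.nonneg_of_le (hA.le c)
  refine ⟨p.withDensity fun c => ENNReal.ofReal (r c), ⟨?_⟩, ?_, ?_⟩
  · rw [withDensity_apply _ MeasurableSet.univ, Measure.restrict_univ,
      ← ofReal_integral_eq_lintegral_ofReal hA.int (ae_of_all _ hr0), h1, ENNReal.ofReal_one]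
  · rw [fDiv, if_pos (withDensity_absolutelyContinuous _ _)]
    refine (eIntegral_mono (h := fun c => (T c : EReal)) ?_).trans ?_
    · filter_upwards [Measure.rnDeriv_withDensity p hA.meas.ennreal_ofReal] with c hc
      rw [hc, ENNReal.toReal_ofReal (hr0 c)]
      exact hA.le c
    · rw [eIntegral_coe hA.intT]
      exact_mod_cast hT
  · rw [integral_withDensity_eq_integral_toReal_smul hA.meas.ennreal_ofReal
      (ae_of_all _ fun c => ENNReal.ofReal_lt_top)]
    congr 1; ext c
    rw [ENNReal.toReal_ofReal (hr0 c), smul_eq_mul, mul_comm]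

/-- Every real lower bound `P` of the primal problem is nearly reached by a dual value. -/
lemma strong_duality [IsProbabilityMeasure p] {φ : ℝ → EReal} (hφ : Gen φ)
    {f : C → ℝ} (hf : Measurable f) {M : ℝ} (hM : 0 ≤ M) (hfM : ∀ c, |f c| ≤ M)
    {ε P δ : ℝ} (hε : 0 < ε) (hδ : 0 < δ)
    (hP : ∀ q : Measure C, IsProbabilityMeasure q → fDiv φ q p ≤ (ε : EReal) → P ≤ ∫ c, f c ∂q) :
    ∃ lam : ℝ, 0 ≤ lam ∧ ∃ b : ℝ, ((P - δ : ℝ) : EReal) ≤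
      (b : EReal) - (lam : EReal) * (ε : EReal) - eIntegral p (fun c =>
        ⨆ u : ℝ, (((b - f c) * u : ℝ) : EReal) - (lam : EReal) * φ u) := by
  obtain ⟨lam, b, hl, H⟩ := exists_multiplier_pos (p := p) hφ hf hM hfM hε hδ
    fun r T hA h1 hT => by
      obtain ⟨q, hq, hqd, hqf⟩ := hA.exists_measure hφ h1 hT f
      exact hqf ▸ hP q hq hqd
  refine ⟨lam, hl.le, b, ?_⟩
  have hconj := eIntegral_conj_le (p := p) hφ (y := fun c => b - f c) (hf.const_sub b)
    (B := |b| + M) (fun c => (abs_sub _ _).trans (by linarith [hfM c])) hl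
    (K := b - lam * ε - (P - δ)) fun r T hA => by
      rw [integral_lagrangian hf hfM hA.int hA.intT]
      linarith [H r T hA]
  refine le_trans ?_ (EReal.sub_le_sub le_rfl hconj)
  exact_mod_cast (by linarith : P - δ ≤ b - lam * ε - (b - lam * ε - (P - δ)))

end Duality

end DRBO

/-- **Theorem 1 (duality for distributionally robust BO with φ-divergences).**
For a compact metrizable space `C`, a Borel probability measure `p`, a bounded measurable
`f : C → ℝ` and `ε > 0`, the infimum of `∫ f dq` over Borel probability measures `q` with
`D_φ(q, p) ≤ ε` equals the supremum over `λ ≥ 0` and `b ∈ ℝ` of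
`b − λ·ε − ∫ (λφ)*(b − f c) dp(c)`, where `(λφ)*` is the convex conjugate of `u ↦ λ·φ(u)`. -/
theorem drbo_phi_divergence_duality
    {C : Type*} [TopologicalSpace C] [CompactSpace C]
    [TopologicalSpace.MetrizableSpace C] [MeasurableSpace C] [BorelSpace C]
    (p : Measure C) [IsProbabilityMeasure p]
    (f : C → ℝ) (hf : Measurable f) (M : ℝ) (hfM : ∀ c, |f c| ≤ M)
    (φ : ℝ → EReal)
    (hφconv : ∀ x y t : ℝ, 0 ≤ t → t ≤ 1 →
      φ (t * x + (1 - t) * y) ≤ (t : EReal) * φ x + ((1 - t : ℝ) : EReal) * φ y)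
    (hφlsc : LowerSemicontinuous φ)
    (hφone : φ 1 = 0)
    (hφneg : ∀ u : ℝ, u < 0 → φ u = ⊤)
    (ε : ℝ) (hε : 0 < ε) :
    sInf {v : EReal | ∃ q : Measure C, IsProbabilityMeasure q ∧
        fDiv φ q p ≤ (ε : EReal) ∧ v = ((∫ c, f c ∂q : ℝ) : EReal)} =
      sSup {v : EReal | ∃ lam : ℝ, 0 ≤ lam ∧ ∃ b : ℝ,
        v = (b : EReal) - (lam : EReal) * (ε : EReal) -
          eIntegral p (fun c =>
            ⨆ u : ℝ, (((b - f c) * u : ℝ) : EReal) - (lam : EReal) * φ u)} := by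

  have hφ : DRBO.Gen φ := ⟨hφconv, hφlsc, hφone, hφneg⟩
  have hM : 0 ≤ M := by
    obtain ⟨c⟩ := nonempty_of_isProbabilityMeasure p
    exact (abs_nonneg _).trans (hfM c)
  apply le_antisymm
  · refine le_of_forall_lt fun c hc => ?_
    obtain ⟨P, hcP, hP⟩ := EReal.lt_iff_exists_real_btwn.mp hc
    obtain ⟨P', hcP', hP'⟩ := EReal.lt_iff_exists_real_btwn.mp hcP
    obtain ⟨lam, hl, b, hb⟩ := DRBO.strong_duality (p := p) (P := P) (δ := P - P') hφ hf hM hfM hε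
      (sub_pos.mpr (by exact_mod_cast hP')) fun q hq hqd => by
        exact_mod_cast hP.le.trans (sInf_le ⟨q, hq, hqd, rfl⟩)
    rw [sub_sub_cancel] at hb
    exact hcP'.trans_le (hb.trans (le_sSup ⟨lam, hl, b, rfl⟩))
  · refine sSup_le ?_
    rintro _ ⟨lam, hl, b, rfl⟩
    refine le_sInf ?_
    rintro _ ⟨q, hq, hqd, rfl⟩
    exact DRBO.weak_duality hφ hf hfM hqd hl b
end

section
/- Let C be a compact metrizable topological space, p a Borel probability measure on C, h : C → ℝ a bounded measurable function, and λ > 0. Let φ : ℝ → (−∞, ∞] be convex and lower semicontinuous with φ(1) = 0 and φ(u) = +∞ for u < 0. Then the supremum, over all Borel probability measures q on C, of ∫ h dq − λ·D_φ(q, p), equals the infimum over b ∈ ℝ of λ·∫ φ*((b + h(c))/λ) dp(c) − b. -/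
/-!
Weak duality is the Fenchel-Young inequality `y * f ≤ φ f + φ* y` integrated against `p`, with
`f = dq/dp` and `y = (b + h) / λ`; convexity and semicontinuity at `1` give
`φ u ≥ -δ - K |u - 1|`, which keeps every integral away from `∞ - ∞`.

For the reverse inequality, `b` is the Lagrange multiplier of the constraint `∫ f dp = 1`.

* If `φ` is finite somewhere on each side of `1`, consider bounded measurable pairs `(f, g)` with
  `φ ∘ f ≤ g`. Since the pairs form a convex set, the difference quotients at `s = 1` of the
  concave value function `s ↦ sup {∫ f h - λ ∫ g | ∫ f = s}` to the left and to the right of `1`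
  are separated by a number `b` (`exists_multiplier`), so that the unconstrained Lagrangian is
  bounded by the primal value. The supremum of the Lagrangian over pairs is the integral of
  the conjugate (`eIntegral_conj_le`), by a countable dense subset of the epigraph of `φ`,
  measurable selection among finitely many points, and monotone convergence.
* If the domain of `φ` lies on one side of `1`, a supergradient need not exist, but the bound
  `φ u ≥ -δ - K |u - 1|` shows that a multiplier of large modulus brings the dual
  value within `λ δ` of `∫ h dp`, the value of the primal problem at `q = p`.
-/

open MeasureTheory
open scoped ENNReal Classical

/-! ### The extended integral -/

lemma erealToENNReal_eq (x : EReal) : erealToENNReal x = x.toENNReal := by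
  simp [erealToENNReal, EReal.toENNReal]

lemma erealToENNReal_coe (r : ℝ) : erealToENNReal (r : EReal) = ENNReal.ofReal r := by
  simp [erealToENNReal]

lemma erealToENNReal_mono {x y : EReal} (hxy : x ≤ y) :
    erealToENNReal x ≤ erealToENNReal y := by
  simp only [erealToENNReal_eq]
  exact EReal.toENNReal_le_toENNReal hxy

section Integral

variable {C : Type*} [MeasurableSpace C] {p : Measure C}

lemma eIntegral_mono {g g' : C → EReal} (hg : ∀ᵐ c ∂p, g c ≤ g' c) :
    eIntegral p g ≤ eIntegral p g' := by
  unfold eIntegral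
  refine EReal.sub_le_sub ?_ ?_
  · refine EReal.coe_ennreal_le_coe_ennreal_iff.2 (lintegral_mono_ae ?_)
    filter_upwards [hg] with c hc using erealToENNReal_mono hc
  · refine EReal.coe_ennreal_le_coe_ennreal_iff.2 (lintegral_mono_ae ?_)
    filter_upwards [hg] with c hc using erealToENNReal_mono (EReal.neg_le_neg_iff.2 hc)

lemma eIntegral_coe {r : C → ℝ} (hr : Integrable r p) :
    eIntegral p (fun c => (r c : EReal)) = ((∫ c, r c ∂p : ℝ) : EReal) := by
  have h1 : ∫⁻ c, ENNReal.ofReal (r c) ∂p ≠ ⊤ := hr.lintegral_lt_top.ne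
  have h2 : ∫⁻ c, ENNReal.ofReal (-r c) ∂p ≠ ⊤ := hr.neg.lintegral_lt_top.ne
  unfold eIntegral
  simp only [← EReal.coe_neg, erealToENNReal_coe]
  rw [integral_eq_lintegral_pos_part_sub_lintegral_neg_part hr, EReal.coe_sub,
    EReal.coe_ennreal_toReal h1, EReal.coe_ennreal_toReal h2]

lemma eIntegral_le {g : C → EReal} {r : C → ℝ} (hr : Integrable r p)
    (hg : ∀ᵐ c ∂p, g c ≤ r c) : eIntegral p g ≤ ((∫ c, r c ∂p : ℝ) : EReal) :=
  (eIntegral_mono hg).trans (eIntegral_coe hr).le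

lemma le_eIntegral {g : C → EReal} {r : C → ℝ} (hr : Integrable r p)
    (hg : ∀ᵐ c ∂p, (r c : EReal) ≤ g c) : ((∫ c, r c ∂p : ℝ) : EReal) ≤ eIntegral p g :=
  (eIntegral_coe hr).ge.trans (eIntegral_mono hg)

/-- A measurable function with an integrable real minorant and extended integral below `⊤` is
almost everywhere equal to an integrable real function. -/
lemma exists_integrable_of_eIntegral_ne_top {g : C → EReal} (hgm : Measurable g) {r : C → ℝ}
    (hr : Integrable r p) (hg : ∀ c, (r c : EReal) ≤ g c) (htop : eIntegral p g ≠ ⊤) :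
    ∃ g' : C → ℝ, Integrable g' p ∧ (∀ᵐ c ∂p, g c = g' c) ∧
      eIntegral p g = ((∫ c, g' c ∂p : ℝ) : EReal) := by
  have hneg : ∫⁻ c, erealToENNReal (-(g c)) ∂p ≠ ⊤ := by
    refine ne_top_of_le_ne_top hr.neg.lintegral_lt_top.ne (lintegral_mono fun c => ?_)
    rw [Pi.neg_apply, ← erealToENNReal_coe, EReal.coe_neg]
    exact erealToENNReal_mono (EReal.neg_le_neg_iff.2 (hg c))
  have hpos : ∫⁻ c, erealToENNReal (g c) ∂p ≠ ⊤ := by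
    intro h
    apply htop
    unfold eIntegral
    rw [h, ← EReal.coe_ennreal_toReal hneg, EReal.coe_ennreal_top, EReal.top_sub_coe]
  have hm1 : Measurable fun c => erealToENNReal (g c) := by
    simp only [erealToENNReal_eq]
    exact measurable_ereal_toENNReal.comp hgm
  have hlt : ∀ᵐ c ∂p, erealToENNReal (g c) < ⊤ := ae_lt_top hm1 hpos
  have hae : ∀ᵐ c ∂p, g c = ((g c).toReal : EReal) := by
    filter_upwards [hlt] with c hc
    refine (EReal.coe_toReal ?_ ?_).symm
    · intro h
      simp [h, erealToENNReal] at hc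
    · exact ne_bot_of_le_ne_bot (EReal.coe_ne_bot _) (hg c)
  have hint : Integrable (fun c => (g c).toReal) p := by
    have h1 := integrable_toReal_of_lintegral_ne_top hm1.aemeasurable hpos
    refine (h1.abs.add hr.abs).mono' hgm.ereal_toReal.aestronglyMeasurable ?_
    filter_upwards [hae] with c hc
    have h2 := hg c
    rw [hc, EReal.coe_le_coe_iff] at h2
    have h3 : (erealToENNReal (g c)).toReal = max (g c).toReal 0 := by
      rw [hc, erealToENNReal_coe, ENNReal.toReal_ofReal', EReal.toReal_coe]
    simp only [Pi.add_apply, h3, Real.norm_eq_abs]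
    rcases le_total 0 (g c).toReal with h0 | h0
    · rw [max_eq_left h0]
      linarith [abs_nonneg (r c)]
    · rw [max_eq_right h0, abs_of_nonpos h0, abs_zero]
      have := neg_abs_le (r c)
      linarith
  refine ⟨_, hint, hae, le_antisymm (eIntegral_le hint ?_) (le_eIntegral hint ?_)⟩
  · filter_upwards [hae] with c hc using hc.le
  · filter_upwards [hae] with c hc using hc.ge

end Integral

/-! ### Convexity of the divergence generator -/

lemma phi_convex_real {φ : ℝ → EReal}
    (hφconv : ∀ x y t : ℝ, 0 ≤ t → t ≤ 1 →
      φ (t * x + (1 - t) * y) ≤ (t : EReal) * φ x + ((1 - t : ℝ) : EReal) * φ y)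
    {x y t a b : ℝ} (ht0 : 0 ≤ t) (ht1 : t ≤ 1) (hx : φ x ≤ a) (hy : φ y ≤ b) :
    φ (t * x + (1 - t) * y) ≤ ((t * a + (1 - t) * b : ℝ) : EReal) := by
  refine (hφconv x y t ht0 ht1).trans ?_
  rw [EReal.coe_add, EReal.coe_mul, EReal.coe_mul]
  have h1 : (0 : EReal) ≤ t := by exact_mod_cast ht0
  have h2 : (0 : EReal) ≤ ((1 - t : ℝ) : EReal) := by
    exact_mod_cast sub_nonneg.2 ht1
  exact add_le_add (mul_le_mul_of_nonneg_left hx h1) (mul_le_mul_of_nonneg_left hy h2)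

/-- Semicontinuity controls `φ` near `1`, and convexity propagates the bound along rays from `1`.
In particular `φ` never takes the value `⊥`. -/
lemma phi_lower_bound {φ : ℝ → EReal}
    (hφconv : ∀ x y t : ℝ, 0 ≤ t → t ≤ 1 →
      φ (t * x + (1 - t) * y) ≤ (t : EReal) * φ x + ((1 - t : ℝ) : EReal) * φ y)
    (hφlsc : LowerSemicontinuous φ) (hφone : φ 1 = 0) {δ : ℝ} (hδ : 0 < δ) :
    ∃ K : ℝ, 0 ≤ K ∧ ∀ u : ℝ, ((-δ - K * |u - 1| : ℝ) : EReal) ≤ φ u := by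
  have h1 : ((-δ : ℝ) : EReal) < φ 1 := by
    rw [hφone]
    exact_mod_cast neg_lt_zero.2 hδ
  obtain ⟨r, hr, hball⟩ := Metric.eventually_nhds_iff.1 (hφlsc 1 _ h1)
  refine ⟨2 * δ / r, by positivity, fun u => ?_⟩
  by_contra! hu
  rcases lt_or_ge (|u - 1|) r with hur | hur
  · have h2 := hball (y := u) (by rwa [Real.dist_eq])
    have h3 := h2.trans hu
    rw [EReal.coe_lt_coe_iff] at h3
    have : 0 ≤ 2 * δ / r * |u - 1| := by positivity
    linarith
    -- Compare with the point at distance `r / 2` from `1` on the segment from `1` to `u`.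
  · have hd : 0 < |u - 1| := hr.trans_le hur
    set t := r / (2 * |u - 1|) with ht
    have ht0 : 0 < t := by positivity
    have htd : t * |u - 1| = r / 2 := by rw [ht]; field_simp
    have ht1 : t ≤ 1 := by
      rw [ht, div_le_one (by positivity)]
      linarith
    have h2 := phi_convex_real hφconv ht0.le ht1 hu.le (b := 0) (y := 1) (by simp [hφone])
    have h3 := hball (y := t * u + (1 - t) * 1) (by
      rw [Real.dist_eq, show t * u + (1 - t) * 1 - 1 = t * (u - 1) by ring, abs_mul,
        abs_of_pos ht0, htd]
      linarith)
    have h4 := h3.trans_le h2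
    rw [EReal.coe_lt_coe_iff] at h4
    have h5 : t * (-δ - 2 * δ / r * |u - 1|) = -(t * δ) - δ := by
      have : t * (2 * δ / r * |u - 1|) = δ := by
        rw [show t * (2 * δ / r * |u - 1|) = 2 * δ / r * (t * |u - 1|) by ring, htd]
        field_simp
      linear_combination -this
    have : 0 < t * δ := by positivity
    linarith

/-- The convex conjugate `φ*`. -/
noncomputable def conj (φ : ℝ → EReal) (y : ℝ) : EReal :=
  ⨆ u : ℝ, ((y * u : ℝ) : EReal) - φ u

lemma le_conj {φ : ℝ → EReal} (hφone : φ 1 = 0) (y : ℝ) : (y : EReal) ≤ conj φ y := by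
  have := le_iSup (fun u : ℝ => ((y * u : ℝ) : EReal) - φ u) 1
  refine le_trans ?_ this
  simp [hφone]

lemma conj_measurable {φ : ℝ → EReal} (hbot : ∀ u, φ u ≠ ⊥) : Measurable (conj φ) := by
  refine LowerSemicontinuous.measurable (lowerSemicontinuous_iSup fun u => ?_)
  rcases eq_or_ne (φ u) ⊤ with h | h
  · simp only [h, EReal.sub_top]
    exact lowerSemicontinuous_const
  · lift φ u to ℝ using ⟨h, hbot u⟩ with v
    simp only [← EReal.coe_sub]
    exact (continuous_coe_real_ereal.comp (by fun_prop)).lowerSemicontinuous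

/-! ### Duality -/

section Duality

variable {C : Type*} [MeasurableSpace C] {p : Measure C}

lemma weak_duality [IsProbabilityMeasure p] {φ : ℝ → EReal}
    (hφconv : ∀ x y t : ℝ, 0 ≤ t → t ≤ 1 →
      φ (t * x + (1 - t) * y) ≤ (t : EReal) * φ x + ((1 - t : ℝ) : EReal) * φ y)
    (hφlsc : LowerSemicontinuous φ) (hφone : φ 1 = 0)
    {h : C → ℝ} (hh : Measurable h) {M : ℝ} (hhM : ∀ c, |h c| ≤ M) {lam : ℝ} (hlam : 0 < lam)
    (q : Measure C) [IsProbabilityMeasure q] (b : ℝ) :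
    ((∫ c, h c ∂q : ℝ) : EReal) - (lam : EReal) * fDiv φ q p ≤
      (lam : EReal) * eIntegral p (fun c => conj φ ((b + h c) / lam)) - (b : EReal) := by
  obtain ⟨K, -, hK⟩ := phi_lower_bound hφconv hφlsc hφone one_pos
  have hbot : ∀ u, φ u ≠ ⊥ := fun u => ne_bot_of_le_ne_bot (EReal.coe_ne_bot _) (hK u)
  have hhq : Integrable h q := Integrable.of_bound hh.aestronglyMeasurable M (.of_forall hhM)
  have hhp : Integrable h p := Integrable.of_bound hh.aestronglyMeasurable M (.of_forall hhM)
  rcases eq_or_ne (fDiv φ q p) ⊤ with hD | hD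
  · rw [hD, EReal.coe_mul_top_of_pos hlam, EReal.sub_top]
    exact bot_le
  have hac : q ≪ p := by
    by_contra hac
    exact hD (if_neg hac)
  rw [fDiv, if_pos hac] at hD ⊢
  rcases eq_or_ne (eIntegral p (fun c => conj φ ((b + h c) / lam))) ⊤ with hE | hE
  · rw [hE, EReal.coe_mul_top_of_pos hlam, EReal.top_sub_coe]
    exact le_top
  have hf : Integrable (fun c => (q.rnDeriv p c).toReal) p := Measure.integrable_toReal_rnDeriv
  have hf1 : ∫ c, (q.rnDeriv p c).toReal ∂p = 1 := by
    rw [Measure.integral_toReal_rnDeriv hac, probReal_univ]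
  have hfh : Integrable (fun c => (q.rnDeriv p c).toReal * h c) p :=
    hf.mul_bdd (c := M) hh.aestronglyMeasurable (.of_forall hhM)
  obtain ⟨g1, hg1, hg1e, hg1i⟩ := exists_integrable_of_eIntegral_ne_top
    (hφlsc.measurable.comp (Measure.measurable_rnDeriv q p).ennreal_toReal)
    (r := fun c => -1 - K * |(q.rnDeriv p c).toReal - 1|)
    ((integrable_const _).sub ((hf.sub (integrable_const _)).abs.const_mul K))
    (fun c => hK _) hD
  have hy : Integrable (fun c => (b + h c) / lam) p :=
    ((integrable_const b).add hhp).div_const lam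
  obtain ⟨g2, hg2, hg2e, hg2i⟩ := exists_integrable_of_eIntegral_ne_top
    ((conj_measurable hbot).comp (by fun_prop : Measurable fun c => (b + h c) / lam))
    hy (fun c => le_conj hφone _) hE
  simp only [Function.comp_def] at hg1i hg2i
  rw [hg1i, hg2i]
  have hle : ∀ᵐ c ∂p, (b * (q.rnDeriv p c).toReal + (q.rnDeriv p c).toReal * h c)
      ≤ lam * (g1 c + g2 c) := by
    filter_upwards [hg1e, hg2e] with c h1 h2
    simp only [Function.comp_def] at h1 h2
    have h3 := le_iSup (fun u : ℝ => (((b + h c) / lam * u : ℝ) : EReal) - φ u)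
      (q.rnDeriv p c).toReal
    have h4 : _ ≤ conj φ ((b + h c) / lam) := h3
    rw [h1, h2, ← EReal.coe_sub, EReal.coe_le_coe_iff] at h4
    have h5 := mul_le_mul_of_nonneg_left (sub_le_iff_le_add.1 h4) hlam.le
    have h6 : lam * ((b + h c) / lam * (q.rnDeriv p c).toReal) =
        b * (q.rnDeriv p c).toReal + (q.rnDeriv p c).toReal * h c := by
      field_simp
    linarith
  have hI := integral_mono_ae ((hf.const_mul b).add hfh) ((hg1.add hg2).const_mul lam) hle
  simp only [Pi.add_apply] at hI
  rw [integral_add (hf.const_mul b) hfh, integral_const_mul, integral_const_mul,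
    integral_add hg1 hg2, hf1, integral_toReal_rnDeriv_mul hac] at hI
  norm_cast
  linarith

/-- Bounded measurable pairs `(f, g)` with `g` a real majorant of `φ ∘ f`. Allowing a majorant
instead of `φ ∘ f` itself makes this class obviously convex. -/
structure Adm (φ : ℝ → EReal) (f g : C → ℝ) : Prop where
  meas_f : Measurable f
  meas_g : Measurable g
  bdd : ∃ R : ℝ, ∀ c, |f c| ≤ R ∧ |g c| ≤ R
  le : ∀ c, φ (f c) ≤ g c

lemma Adm.const {φ : ℝ → EReal} {u v : ℝ} (huv : φ u ≤ v) :
    Adm φ (fun _ : C => u) (fun _ => v) :=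
  ⟨measurable_const, measurable_const, ⟨max |u| |v|, fun _ => ⟨le_max_left _ _, le_max_right _ _⟩⟩,
    fun _ => huv⟩

lemma Adm.integrable_f [IsFiniteMeasure p] {φ : ℝ → EReal} {f g : C → ℝ} (hA : Adm φ f g) :
    Integrable f p := by
  obtain ⟨R, hR⟩ := hA.bdd
  exact Integrable.of_bound hA.meas_f.aestronglyMeasurable R (.of_forall fun c => (hR c).1)

lemma Adm.integrable_g [IsFiniteMeasure p] {φ : ℝ → EReal} {f g : C → ℝ} (hA : Adm φ f g) :
    Integrable g p := by
  obtain ⟨R, hR⟩ := hA.bdd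
  exact Integrable.of_bound hA.meas_g.aestronglyMeasurable R (.of_forall fun c => (hR c).2)

lemma Adm.combo {φ : ℝ → EReal}
    (hφconv : ∀ x y t : ℝ, 0 ≤ t → t ≤ 1 →
      φ (t * x + (1 - t) * y) ≤ (t : EReal) * φ x + ((1 - t : ℝ) : EReal) * φ y)
    {f g f' g' : C → ℝ} (hA : Adm φ f g) (hA' : Adm φ f' g') {t : ℝ} (ht0 : 0 ≤ t) (ht1 : t ≤ 1) :
    Adm φ (fun c => t * f c + (1 - t) * f' c) (fun c => t * g c + (1 - t) * g' c) := by
  obtain ⟨R, hR⟩ := hA.bdd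
  obtain ⟨R', hR'⟩ := hA'.bdd
  have key : ∀ x y : ℝ, |x| ≤ R → |y| ≤ R' → |t * x + (1 - t) * y| ≤ t * R + (1 - t) * R' := by
    intro x y hx hy
    have h1 := mul_le_mul_of_nonneg_left hx ht0
    have h2 := mul_le_mul_of_nonneg_left hy (sub_nonneg.2 ht1)
    calc |t * x + (1 - t) * y| ≤ |t * x| + |(1 - t) * y| := abs_add_le _ _
      _ = t * |x| + (1 - t) * |y| := by
        rw [abs_mul, abs_mul, abs_of_nonneg ht0, abs_of_nonneg (sub_nonneg.2 ht1)]
      _ ≤ _ := by linarith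
  exact ⟨(hA.meas_f.const_mul _).add (hA'.meas_f.const_mul _),
    (hA.meas_g.const_mul _).add (hA'.meas_g.const_mul _),
    ⟨_, fun c => ⟨key _ _ (hR c).1 (hR' c).1, key _ _ (hR c).2 (hR' c).2⟩⟩,
    fun c => phi_convex_real hφconv ht0 ht1 (hA.le c) (hA'.le c)⟩

/-- An admissible pair with `∫ f = 1` is dominated by the primal value at the measure of density
`f`. -/
lemma Adm.le_primal [IsProbabilityMeasure p] {φ : ℝ → EReal}
    (hφneg : ∀ u : ℝ, u < 0 → φ u = ⊤) {h : C → ℝ} {lam : ℝ} (hlam : 0 < lam)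
    {f g : C → ℝ} (hA : Adm φ f g) (hf1 : ∫ c, f c ∂p = 1) :
    ∃ q : Measure C, IsProbabilityMeasure q ∧
      ((∫ c, f c * h c ∂p - lam * ∫ c, g c ∂p : ℝ) : EReal) ≤
        ((∫ c, h c ∂q : ℝ) : EReal) - (lam : EReal) * fDiv φ q p := by
  have hf0 : ∀ c, 0 ≤ f c := by
    intro c
    by_contra! hc
    have := hA.le c
    rw [hφneg _ hc, top_le_iff] at this
    exact EReal.coe_ne_top _ this
  have hm : Measurable fun c => ENNReal.ofReal (f c) := hA.meas_f.ennreal_ofReal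
  refine ⟨p.withDensity fun c => ENNReal.ofReal (f c), ⟨?_⟩, ?_⟩
  · rw [withDensity_apply _ MeasurableSet.univ, Measure.restrict_univ,
      ← ofReal_integral_eq_lintegral_ofReal hA.integrable_f (.of_forall hf0), hf1,
      ENNReal.ofReal_one]
  · have hint : ∫ c, h c ∂(p.withDensity fun c => ENNReal.ofReal (f c)) = ∫ c, f c * h c ∂p := by
      rw [integral_withDensity_eq_integral_toReal_smul hm (.of_forall fun c => by simp)]
      simp only [ENNReal.toReal_ofReal (hf0 _), smul_eq_mul]
    have hD : fDiv φ (p.withDensity fun c => ENNReal.ofReal (f c)) p ≤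
        ((∫ c, g c ∂p : ℝ) : EReal) := by
      rw [fDiv, if_pos (withDensity_absolutelyContinuous _ _)]
      refine eIntegral_le hA.integrable_g ?_
      filter_upwards [Measure.rnDeriv_withDensity p hm] with c hc
      rw [hc, ENNReal.toReal_ofReal (hf0 c)]
      exact hA.le c
    rw [hint, EReal.coe_sub, EReal.coe_mul]
    exact EReal.sub_le_sub le_rfl
      (mul_le_mul_of_nonneg_left hD (by exact_mod_cast hlam.le))

/-- Measurable selection of a maximiser among finitely many points of the epigraph and the base
point `(1, 0)`. -/
lemma exists_adm_max {φ : ℝ → EReal} (hφone : φ 1 = 0) {y : C → ℝ} (hy : Measurable y)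
    (d : ℕ → ℝ × ℝ) (hd : ∀ n, φ (d n).1 ≤ (d n).2) (n : ℕ) :
    ∃ f g : C → ℝ, Adm φ f g ∧ (∀ c, 0 ≤ y c * (f c - 1) - g c) ∧
      ∀ k < n, ∀ c, y c * ((d k).1 - 1) - (d k).2 ≤ y c * (f c - 1) - g c := by
  induction n with
  | zero => exact ⟨_, _, Adm.const (u := 1) (v := 0) (by simp [hφone]), by simp, by simp⟩
  | succ n ih =>
    obtain ⟨f, g, hA, h0, hk⟩ := ih
    obtain ⟨R, hR⟩ := hA.bdd
    let S : Set C := {c | y c * ((d n).1 - 1) - (d n).2 ≤ y c * (f c - 1) - g c}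
    have hmf := hA.meas_f
    have hmg := hA.meas_g
    have hS : MeasurableSet S := measurableSet_le (by fun_prop) (by fun_prop)
    refine ⟨fun c => if c ∈ S then f c else (d n).1, fun c => if c ∈ S then g c else (d n).2,
      ⟨Measurable.ite hS hmf measurable_const, Measurable.ite hS hmg measurable_const,
        ⟨max R (max |(d n).1| |(d n).2|), fun c => ?_⟩, fun c => ?_⟩, fun c => ?_,
        fun k hkn c => ?_⟩
    · by_cases hc : c ∈ S
      · simp only [hc, if_true]
        exact ⟨(hR c).1.trans (le_max_left _ _), (hR c).2.trans (le_max_left _ _)⟩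
      · simp only [hc, if_false]
        exact ⟨(le_max_left _ _).trans (le_max_right _ _),
          (le_max_right _ _).trans (le_max_right _ _)⟩
    · by_cases hc : c ∈ S
      · simpa only [hc, if_true] using hA.le c
      · simpa only [hc, if_false] using hd n
    · by_cases hc : c ∈ S
      · simpa only [hc, if_true] using h0 c
      · simp only [hc, if_false]
        exact (h0 c).trans (not_le.1 hc).le
    · rcases Nat.lt_succ_iff_lt_or_eq.1 hkn with hkn | rfl
      · by_cases hc : c ∈ S
        · simpa only [hc, if_true] using hk k hkn c
        · simp only [hc, if_false]
          exact (hk k hkn c).trans (not_le.1 hc).le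
      · by_cases hc : c ∈ S
        · simp only [hc, if_true]
          exact hc
        · simp only [hc, if_false, le_refl]

/-- Interchange of supremum and integral: a bound on `∫ (y * f - g)` over all admissible pairs
bounds `∫ φ*(y)`. A countable dense subset of the epigraph computes `φ*`, finitely many of its
points admit a measurable maximiser, and monotone convergence passes to the limit. -/
lemma eIntegral_conj_le [IsProbabilityMeasure p] {φ : ℝ → EReal} (hbot : ∀ u, φ u ≠ ⊥)
    (hφone : φ 1 = 0)
    {y : C → ℝ} (hy : Measurable y) {R : ℝ} (hyR : ∀ c, |y c| ≤ R) {B : ℝ}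
    (hB : ∀ f g : C → ℝ, Adm φ f g → ∫ c, (y c * (f c - 1) - g c) ∂p ≤ B) :
    eIntegral p (fun c => conj φ (y c)) ≤ ((∫ c, y c ∂p + B : ℝ) : EReal) := by
  let G := {x : ℝ × ℝ // φ x.1 ≤ x.2}
  have : Nonempty G := ⟨⟨(1, 0), by simp [hφone]⟩⟩
  let e : ℕ → G := TopologicalSpace.denseSeq G
  have he : DenseRange e := TopologicalSpace.denseRange_denseSeq G
  have hyi : Integrable y p := Integrable.of_bound hy.aestronglyMeasurable R (.of_forall hyR)
  have hB0 : 0 ≤ B := by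
    have := hB _ _ (Adm.const (C := C) (φ := φ) (u := 1) (v := 0) (by simp [hφone]))
    simpa using this
  let k : ℕ → C → ℝ≥0∞ := fun n c =>
    ⨆ i ∈ Finset.range n, ENNReal.ofReal (y c * ((e i).1.1 - 1) - (e i).1.2)
  have hkm : ∀ n, Measurable (k n) := fun n =>
    Measurable.biSup _ (Finset.range n).countable_toSet fun i _ => by fun_prop
  have hkmono : Monotone k := by
    intro n m hnm c
    exact biSup_mono fun i hi => Finset.range_mono hnm hi
  have hkint : ∫⁻ c, (⨆ n, k n c) ∂p ≤ ENNReal.ofReal B := by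
    rw [lintegral_iSup hkm hkmono]
    refine iSup_le fun n => ?_
    obtain ⟨f, g, hA, h0, hmax⟩ := exists_adm_max hφone hy (fun i => (e i).1) (fun i => (e i).2) n
    have hi : Integrable (fun c => y c * (f c - 1) - g c) p :=
      ((hA.integrable_f.sub (integrable_const _)).bdd_mul
        hy.aestronglyMeasurable (.of_forall hyR)).sub hA.integrable_g
    calc ∫⁻ c, k n c ∂p ≤ ∫⁻ c, ENNReal.ofReal (y c * (f c - 1) - g c) ∂p := by
          refine lintegral_mono fun c => iSup₂_le fun i hi => ?_
          exact ENNReal.ofReal_le_ofReal (hmax i (Finset.mem_range.1 hi) c)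
      _ = ENNReal.ofReal (∫ c, (y c * (f c - 1) - g c) ∂p) :=
          (ofReal_integral_eq_lintegral_ofReal hi (.of_forall h0)).symm
      _ ≤ ENNReal.ofReal B := ENNReal.ofReal_le_ofReal (hB f g hA)
  have hksm : Measurable fun c => ⨆ n, k n c := Measurable.iSup hkm
  have hkne : ∫⁻ c, (⨆ n, k n c) ∂p ≠ ⊤ := ne_top_of_le_ne_top ENNReal.ofReal_ne_top hkint
  have hkr := integrable_toReal_of_lintegral_ne_top hksm.aemeasurable hkne
  have hlt := ae_lt_top hksm hkne
  refine (eIntegral_le (hyi.add hkr) ?_).trans ?_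
  · filter_upwards [hlt] with c hc
    refine iSup_le fun u => ?_
    rcases eq_or_ne (φ u) ⊤ with hu | hu
    · rw [hu, EReal.sub_top]
      exact bot_le
    · obtain ⟨v, hv⟩ : ∃ v : ℝ, φ u = v := ⟨_, (EReal.coe_toReal hu (hbot u)).symm⟩
      rw [hv, ← EReal.coe_sub, EReal.coe_le_coe_iff]
      have hall : ∀ x : G, y c * (x.1.1 - 1) - x.1.2 ≤ (⨆ n, k n c).toReal := by
        intro x
        refine he.induction_on
          (p := fun x : G => y c * (x.1.1 - 1) - x.1.2 ≤ (⨆ n, k n c).toReal) x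
          (isClosed_le (by fun_prop) continuous_const) fun n => ?_
        rw [← ENNReal.ofReal_le_iff_le_toReal hc.ne]
        refine le_trans ?_ (le_iSup (fun n => k n c) (n + 1))
        exact le_iSup₂ (f := fun i (_ : i ∈ Finset.range (n + 1)) =>
          ENNReal.ofReal (y c * ((e i).1.1 - 1) - (e i).1.2)) n (by simp)
      have := hall ⟨(u, v), hv.le⟩
      simp only [Pi.add_apply] at this ⊢
      linarith
  · rw [EReal.coe_le_coe_iff]
    simp only [Pi.add_apply]
    rw [integral_add hyi hkr, integral_toReal hksm.aemeasurable hlt]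
    have := ENNReal.toReal_mono ENNReal.ofReal_ne_top hkint
    rw [ENNReal.toReal_ofReal hB0] at this
    linarith

/-- Existence of a Lagrange multiplier for the constraint `∫ f = 1`, when the domain of `φ` has
points on both sides of `1`. -/
lemma exists_multiplier [IsProbabilityMeasure p] {φ : ℝ → EReal}
    (hφconv : ∀ x y t : ℝ, 0 ≤ t → t ≤ 1 →
      φ (t * x + (1 - t) * y) ≤ (t : EReal) * φ x + ((1 - t : ℝ) : EReal) * φ y)
    {h : C → ℝ} (hh : Measurable h) {M : ℝ} (hhM : ∀ c, |h c| ≤ M) {lam P : ℝ}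
    (hP : ∀ f g : C → ℝ, Adm φ f g → ∫ c, f c ∂p = 1 →
      ∫ c, f c * h c ∂p - lam * ∫ c, g c ∂p ≤ P)
    {u₀ u₁ : ℝ} (h0 : u₀ < 1) (h1 : 1 < u₁) (hu0 : φ u₀ < ⊤) (hu1 : φ u₁ < ⊤) :
    ∃ b : ℝ, ∀ f g : C → ℝ, Adm φ f g →
      ∫ c, f c * h c ∂p - lam * ∫ c, g c ∂p + b * (∫ c, f c ∂p - 1) ≤ P := by
  obtain ⟨v₀, hv0, -⟩ := EReal.lt_iff_exists_real_btwn.1 hu0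
  obtain ⟨v₁, hv1, -⟩ := EReal.lt_iff_exists_real_btwn.1 hu1
  have hfh : ∀ f g : C → ℝ, Adm φ f g → Integrable (fun c => f c * h c) p := fun f g hA =>
    hA.integrable_f.mul_bdd (c := M) hh.aestronglyMeasurable (.of_forall hhM)
  -- `b` is a cut between the slopes to the left and to the right of `s = 1`.
  obtain ⟨b, hbl, hbu⟩ := exists_between_of_forall_le
    (s := {x : ℝ | ∃ f g : C → ℝ, Adm φ f g ∧ ∫ c, f c ∂p < 1 ∧
      x = (∫ c, f c * h c ∂p - lam * ∫ c, g c ∂p - P) / (1 - ∫ c, f c ∂p)})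
    (t := {x : ℝ | ∃ f g : C → ℝ, Adm φ f g ∧ 1 < ∫ c, f c ∂p ∧
      x = (P - (∫ c, f c * h c ∂p - lam * ∫ c, g c ∂p)) / (∫ c, f c ∂p - 1)})
    ⟨_, _, _, Adm.const hv0.le, by simpa using h0, rfl⟩
    ⟨_, _, _, Adm.const hv1.le, by simpa using h1, rfl⟩ (by
      rintro _ ⟨f, g, hA, hs, rfl⟩ _ ⟨f', g', hA', hs', rfl⟩
      set s := ∫ c, f c ∂p with hsdef
      set s' := ∫ c, f' c ∂p with hsdef'
      set t := (s' - 1) / (s' - s) with ht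
      have hss : 0 < s' - s := by linarith
      have ht0 : 0 ≤ t := div_nonneg (by linarith) hss.le
      have ht1 : t ≤ 1 := by rw [ht, div_le_one hss]; linarith
      have hts : t * (s' - s) = s' - 1 := by rw [ht]; field_simp
      have hc := hP _ _ (hA.combo hφconv hA' ht0 ht1) (by
        rw [integral_add (hA.integrable_f.const_mul _) (hA'.integrable_f.const_mul _),
          integral_const_mul, integral_const_mul, ← hsdef, ← hsdef']
        linarith)
      have e1 : ∫ c, (t * f c + (1 - t) * f' c) * h c ∂p =
          t * ∫ c, f c * h c ∂p + (1 - t) * ∫ c, f' c * h c ∂p := by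
        rw [← integral_const_mul, ← integral_const_mul,
          ← integral_add ((hfh f g hA).const_mul _) ((hfh f' g' hA').const_mul _)]
        congr 1
        ext c
        ring
      rw [e1, integral_add (hA.integrable_g.const_mul _) (hA'.integrable_g.const_mul _),
        integral_const_mul, integral_const_mul] at hc
      rw [div_le_div_iff₀ (by linarith) (by linarith)]
      have h2 := mul_le_mul_of_nonneg_right hc hss.le
      have h3 : (1 - t) * (s' - s) = 1 - s := by linarith
      set J := ∫ c, f c * h c ∂p
      set J' := ∫ c, f' c * h c ∂p
      set D := ∫ c, g c ∂p
      set D' := ∫ c, g' c ∂p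
      have h4 : (t * J + (1 - t) * J' - lam * (t * D + (1 - t) * D')) * (s' - s) =
          (s' - 1) * (J - lam * D) + (1 - s) * (J' - lam * D') := by
        rw [← hts, ← h3]
        ring
      rw [h4] at h2
      linarith)
  refine ⟨b, fun f g hA => ?_⟩
  rcases lt_trichotomy (∫ c, f c ∂p) 1 with hs | hs | hs
  · have := hbl ⟨f, g, hA, hs, rfl⟩
    rw [div_le_iff₀ (by linarith)] at this
    linarith
  · have := hP f g hA hs
    rw [hs]
    linarith
  · have := hbu ⟨f, g, hA, hs, rfl⟩
    rw [le_div_iff₀ (by linarith)] at this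
    linarith

/-- If the domain of `φ` lies on one side of `1`, the dual value is at most `∫ h + lam * δ` for
every `δ > 0`: for `σ = 1` the domain is in `[1, ∞)`, for `σ = -1` it is in `(-∞, 1]`. -/
lemma dual_le_of_one_sided [IsProbabilityMeasure p] {φ : ℝ → EReal}
    (hφconv : ∀ x y t : ℝ, 0 ≤ t → t ≤ 1 →
      φ (t * x + (1 - t) * y) ≤ (t : EReal) * φ x + ((1 - t : ℝ) : EReal) * φ y)
    (hφlsc : LowerSemicontinuous φ) (hφone : φ 1 = 0)
    {h : C → ℝ} (hh : Measurable h) {M : ℝ} (hhM : ∀ c, |h c| ≤ M) {lam : ℝ} (hlam : 0 < lam)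
    {σ : ℝ} (hσ : |σ| = 1) (hdom : ∀ u, φ u < ⊤ → 0 ≤ σ * (u - 1)) {δ : ℝ} (hδ : 0 < δ) :
    ∃ b : ℝ, (lam : EReal) * eIntegral p (fun c => conj φ ((b + h c) / lam)) - (b : EReal) ≤
      ((∫ c, h c ∂p + lam * δ : ℝ) : EReal) := by
  obtain ⟨K, hK0, hK⟩ := phi_lower_bound hφconv hφlsc hφone hδ
  have hhp : Integrable h p := Integrable.of_bound hh.aestronglyMeasurable M (.of_forall hhM)
  have hσ2 : σ * σ = 1 := by rw [← abs_mul_abs_self, hσ, one_mul]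
  -- With this multiplier `σ * (b + h) / lam ≤ -K` everywhere.
  refine ⟨-σ * (lam * K + M), ?_⟩
  set b := -σ * (lam * K + M) with hb
  have hbh : Integrable (fun c => b + h c) p := (integrable_const b).add hhp
  have hy : Integrable (fun c => (b + h c) / lam + δ) p :=
    (hbh.div_const lam).add (integrable_const δ)
  have hE : eIntegral p (fun c => conj φ ((b + h c) / lam)) ≤ _ := eIntegral_le hy (by
    refine .of_forall fun c => iSup_le fun u => ?_
    rcases eq_or_ne (φ u) ⊤ with hu | hu
    · rw [hu, EReal.sub_top]
      exact bot_le
    · have hd := hdom u (lt_top_iff_ne_top.2 hu)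
      refine (EReal.sub_le_sub le_rfl (hK u)).trans ?_
      rw [← EReal.coe_sub, EReal.coe_le_coe_iff]
      have habs : |u - 1| = σ * (u - 1) := by
        rw [← abs_of_nonneg hd, abs_mul, hσ, one_mul]
      have hs : σ * ((b + h c) / lam) ≤ -K := by
        have h1 : σ * h c ≤ M := by
          refine (le_abs_self _).trans ?_
          rw [abs_mul, hσ, one_mul]
          exact hhM c
        rw [← mul_div_assoc, div_le_iff₀ hlam, hb]
        linear_combination h1 - (lam * K + M) * hσ2
      have h2 := mul_le_mul_of_nonneg_right hs hd
      have h3 : σ * ((b + h c) / lam) * (σ * (u - 1)) = (b + h c) / lam * (u - 1) := by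
        linear_combination ((b + h c) / lam * (u - 1)) * hσ2
      rw [h3] at h2
      rw [habs]
      linarith)
  have hI : ∫ c, ((b + h c) / lam + δ) ∂p = (b + ∫ c, h c ∂p) / lam + δ := by
    rw [integral_add (hbh.div_const lam) (integrable_const δ),
      integral_div, integral_add (integrable_const b) hhp]
    simp
  rw [hI] at hE
  refine (EReal.sub_le_sub (mul_le_mul_of_nonneg_left hE (by exact_mod_cast hlam.le)) le_rfl).trans
    ?_
  rw [← EReal.coe_mul, ← EReal.coe_sub, EReal.coe_le_coe_iff]
  apply le_of_eq
  field_simp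
  ring

lemma dual_le_of_two_sided [IsProbabilityMeasure p] {φ : ℝ → EReal}
    (hφconv : ∀ x y t : ℝ, 0 ≤ t → t ≤ 1 →
      φ (t * x + (1 - t) * y) ≤ (t : EReal) * φ x + ((1 - t : ℝ) : EReal) * φ y)
    (hbot : ∀ u, φ u ≠ ⊥) (hφone : φ 1 = 0)
    {h : C → ℝ} (hh : Measurable h) {M : ℝ} (hhM : ∀ c, |h c| ≤ M) {lam : ℝ} (hlam : 0 < lam)
    {P : ℝ} (hP : ∀ f g : C → ℝ, Adm φ f g → ∫ c, f c ∂p = 1 →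
      ∫ c, f c * h c ∂p - lam * ∫ c, g c ∂p ≤ P)
    {u₀ u₁ : ℝ} (h0 : u₀ < 1) (h1 : 1 < u₁) (hu0 : φ u₀ < ⊤) (hu1 : φ u₁ < ⊤) :
    ∃ b : ℝ, (lam : EReal) * eIntegral p (fun c => conj φ ((b + h c) / lam)) - (b : EReal) ≤
      (P : EReal) := by
  obtain ⟨b, hb⟩ := exists_multiplier hφconv hh hhM hP h0 h1 hu0 hu1
  refine ⟨b, ?_⟩
  have hhp : Integrable h p := Integrable.of_bound hh.aestronglyMeasurable M (.of_forall hhM)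
  have hE := eIntegral_conj_le (p := p) hbot hφone (y := fun c => (b + h c) / lam) (by fun_prop)
    (R := (|b| + M) / lam) (fun c => by
      rw [abs_div, abs_of_pos hlam]
      gcongr
      exact (abs_add_le _ _).trans (by linarith [hhM c]))
    (B := (P - ∫ c, h c ∂p) / lam) (fun f g hA => by
      have hfh : Integrable (fun c => f c * h c) p :=
        hA.integrable_f.mul_bdd (c := M) hh.aestronglyMeasurable (.of_forall hhM)
      have e : ∀ c, (b + h c) / lam * (f c - 1) - g c =
          (f c * h c - lam * g c + b * (f c - 1) - h c) / lam := by
        intro c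
        field_simp
        ring
      simp only [e]
      rw [integral_div]
      gcongr
      have i1 : Integrable (fun c => lam * g c) p := hA.integrable_g.const_mul lam
      have i2 : Integrable (fun c => b * (f c - 1)) p :=
        (hA.integrable_f.sub (integrable_const 1)).const_mul b
      have i3 : Integrable (fun c => f c * h c - lam * g c) p := hfh.sub i1
      have i4 : Integrable (fun c => f c * h c - lam * g c + b * (f c - 1)) p := i3.add i2
      rw [integral_sub i4 hhp, integral_add i3 i2, integral_sub hfh i1, integral_const_mul,
        integral_const_mul, integral_sub hA.integrable_f (integrable_const 1)]
      have := hb f g hA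
      simp only [integral_const, probReal_univ, smul_eq_mul, mul_one]
      linarith)
  refine (EReal.sub_le_sub (mul_le_mul_of_nonneg_left hE (by exact_mod_cast hlam.le)) le_rfl).trans
    ?_
  rw [← EReal.coe_mul, ← EReal.coe_sub, EReal.coe_le_coe_iff, integral_div,
    integral_add (integrable_const b) hhp]
  simp only [integral_const, probReal_univ, smul_eq_mul, one_mul]
  apply le_of_eq
  field_simp
  ring

end Duality

/-- **Restricted Fenchel-dual representation of the φ-divergence.**
For a compact metrizable space `C`, a Borel probability measure `p`, a bounded measurable
`h : C → ℝ` and `λ > 0`, the supremum over Borel probability measures `q` of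
`∫ h dq − λ·D_φ(q, p)` equals the infimum over `b ∈ ℝ` of
`λ·∫ φ*((b + h c)/λ) dp(c) − b`, where `φ*` is the convex conjugate of `φ`. -/
theorem phi_divergence_fenchel_dual
    {C : Type*} [TopologicalSpace C] [CompactSpace C]
    [TopologicalSpace.MetrizableSpace C] [MeasurableSpace C] [BorelSpace C]
    (p : Measure C) [IsProbabilityMeasure p]
    (h : C → ℝ) (hh : Measurable h) (M : ℝ) (hhM : ∀ c, |h c| ≤ M)
    (lam : ℝ) (hlam : 0 < lam)
    (φ : ℝ → EReal)
    (hφconv : ∀ x y t : ℝ, 0 ≤ t → t ≤ 1 →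
      φ (t * x + (1 - t) * y) ≤ (t : EReal) * φ x + ((1 - t : ℝ) : EReal) * φ y)
    (hφlsc : LowerSemicontinuous φ)
    (hφone : φ 1 = 0)
    (hφneg : ∀ u : ℝ, u < 0 → φ u = ⊤) :
    sSup {v : EReal | ∃ q : Measure C, IsProbabilityMeasure q ∧
        v = ((∫ c, h c ∂q : ℝ) : EReal) - (lam : EReal) * fDiv φ q p} =
      sInf {v : EReal | ∃ b : ℝ,
        v = (lam : EReal) *
            eIntegral p (fun c =>
              ⨆ u : ℝ, ((((b + h c) / lam) * u : ℝ) : EReal) - φ u) -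
          (b : EReal)} := by
  change _ = sInf {v : EReal | ∃ b : ℝ,
    v = (lam : EReal) * eIntegral p (fun c => conj φ ((b + h c) / lam)) - (b : EReal)}
  obtain ⟨K, -, hK⟩ := phi_lower_bound hφconv hφlsc hφone one_pos
  have hbot : ∀ u, φ u ≠ ⊥ := fun u => ne_bot_of_le_ne_bot (EReal.coe_ne_bot _) (hK u)
  apply le_antisymm
  · refine sSup_le ?_
    rintro _ ⟨q, hq, rfl⟩
    refine le_sInf ?_
    rintro _ ⟨b, rfl⟩
    exact weak_duality hφconv hφlsc hφone hh hhM hlam q b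
  set S : EReal := sSup {v : EReal | ∃ q : Measure C, IsProbabilityMeasure q ∧
        v = ((∫ c, h c ∂q : ℝ) : EReal) - (lam : EReal) * fDiv φ q p} with hS
  have hfeas : ∀ f g : C → ℝ, Adm φ f g → ∫ c, f c ∂p = 1 →
      ((∫ c, f c * h c ∂p - lam * ∫ c, g c ∂p : ℝ) : EReal) ≤ S := by
    intro f g hA hf1
    obtain ⟨q, hq, hle⟩ := hA.le_primal hφneg (h := h) hlam hf1
    exact hle.trans (le_sSup ⟨q, hq, rfl⟩)
  have hbase : ((∫ c, h c ∂p : ℝ) : EReal) ≤ S := by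
    have := hfeas _ _ (Adm.const (u := 1) (v := 0) (by simp [hφone])) (by simp)
    simpa using this
  have hone : ∀ σ : ℝ, |σ| = 1 → (∀ u, φ u < ⊤ → 0 ≤ σ * (u - 1)) →
      sInf {v : EReal | ∃ b : ℝ,
        v = (lam : EReal) * eIntegral p (fun c => conj φ ((b + h c) / lam)) - (b : EReal)} ≤ S := by
    intro σ hσ hdom
    refine le_trans (EReal.le_of_forall_lt_iff_le.1 fun z hz => ?_) hbase
    rw [EReal.coe_lt_coe_iff] at hz
    obtain ⟨b, hb⟩ := dual_le_of_one_sided (p := p) hφconv hφlsc hφone hh hhM hlam hσ hdom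
      (δ := (z - ∫ c, h c ∂p) / lam) (div_pos (sub_pos.2 hz) hlam)
    refine le_trans (sInf_le ⟨b, rfl⟩) (hb.trans_eq ?_)
    rw [mul_div_cancel₀ _ hlam.ne', add_sub_cancel]
  by_cases hl : ∃ u₀ : ℝ, u₀ < 1 ∧ φ u₀ < ⊤
  · by_cases hr : ∃ u₁ : ℝ, 1 < u₁ ∧ φ u₁ < ⊤
    · obtain ⟨u₀, h0, hu0⟩ := hl
      obtain ⟨u₁, h1, hu1⟩ := hr
      rcases eq_or_ne S ⊤ with hT | hT
      · rw [hT]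
        exact le_top
      · have hSr : ((S.toReal : ℝ) : EReal) = S :=
          EReal.coe_toReal hT (ne_bot_of_le_ne_bot (EReal.coe_ne_bot _) hbase)
        obtain ⟨b, hb⟩ := dual_le_of_two_sided (p := p) hφconv hbot hφone hh hhM hlam
          (P := S.toReal) (fun f g hA hf1 => by
            rw [← EReal.coe_le_coe_iff, hSr]
            exact hfeas f g hA hf1) h0 h1 hu0 hu1
        exact le_trans (sInf_le ⟨b, rfl⟩) (hb.trans_eq hSr)
    · push Not at hr
      refine hone (-1) (by simp) fun u hu => ?_
      by_contra! hc
      exact absurd (hr u (by linarith)) (not_le.2 hu)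
  · push Not at hl
    refine hone 1 (by simp) fun u hu => ?_
    by_contra! hc
    exact absurd (hl u (by linarith)) (not_le.2 hu)
end

section
/- Let n ≥ 1, let p : Fin n → ℝ satisfy p i > 0 for all i and ∑ i, p i = 1, and let f : Fin n → ℝ and ε ≥ 0. Set μ = ∑ i, p i · f i and V = ∑ i, p i · (f i − μ)². Then the infimum, over all q : Fin n → ℝ with ∑ i, q i = 1 and ∑ i, (q i − p i)² / p i ≤ ε, of ∑ i, q i · f i, equals μ − √(ε · V), and this infimum is attained. -/
/-!
Write `μ` and `V` for the `p`-mean and `p`-variance of `f`. Since `q` and `p` have the same total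
mass, `μ - ∑ q f = ∑ (p - q) (f - μ)`, and the Cauchy–Schwarz inequality with weights `1 / p` and
`p` bounds the square of this by `(∑ (q - p)² / p) * V ≤ ε * V`. Equality holds for `q - p`
proportional to `-p (f - μ)`, the factor `√(ε / V)` being the one that exhausts the budget `ε`.
-/

/-- **Example 1 (χ²-divergence), exact finite-dimensional form.**
The infimum of `∑ i, q i * f i` over signed vectors `q` of total mass `1` with
χ²-divergence `∑ i, (q i − p i)²/p i ≤ ε` from the positive probability vector `p` equals
`μ − √(ε·V)` with `μ` the `p`-mean and `V` the `p`-variance of `f`, and it is attained. -/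
theorem chi_squared_finite_dim_duality
    (n : ℕ) (hn : 1 ≤ n)
    (p : Fin n → ℝ) (hp : ∀ i, 0 < p i) (hpsum : ∑ i, p i = 1)
    (f : Fin n → ℝ) (ε : ℝ) (hε : 0 ≤ ε) :
    IsLeast
      {v : ℝ | ∃ q : Fin n → ℝ, (∑ i, q i = 1) ∧
        (∑ i, (q i - p i) ^ 2 / p i ≤ ε) ∧ v = ∑ i, q i * f i}
      ((∑ i, p i * f i) -
        Real.sqrt (ε * ∑ i, p i * (f i - ∑ j, p j * f j) ^ 2)) := by
  set μ := ∑ j, p j * f j with hμ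
  set V := ∑ i, p i * (f i - μ) ^ 2 with hV
  have hV0 : 0 ≤ V := Finset.sum_nonneg fun i _ => mul_nonneg (hp i).le (sq_nonneg _)
  have hcent : ∑ i, p i * (f i - μ) = 0 := by
    simp only [mul_sub, Finset.sum_sub_distrib, ← Finset.sum_mul, hpsum, ← hμ]
    ring
  constructor
  -- If `V = 0`, the convention `ε / 0 = 0` gives the witness `q = p`, which is then optimal.
  · set s := √(ε / V) with hs
    have hs2 : s ^ 2 = ε / V := Real.sq_sqrt (div_nonneg hε hV0)
    have hsV : s ^ 2 * V ≤ ε := by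
      rw [hs2]
      rcases hV0.eq_or_lt with h | h
      · simpa [← h] using hε
      · rw [div_mul_cancel₀ _ h.ne']
    have hsV' : √(ε * V) = s * V := by
      rcases hV0.eq_or_lt with h | h
      · simp [← h]
      · rw [Real.sqrt_eq_iff_mul_self_eq (by positivity) (by positivity)]
        symm
        calc s * V * (s * V) = s ^ 2 * V * V := by ring
          _ = ε * V := by rw [hs2, div_mul_cancel₀ _ h.ne']
    refine ⟨fun i => p i - s * (p i * (f i - μ)), ?_, ?_, ?_⟩
    · rw [Finset.sum_sub_distrib, ← Finset.mul_sum, hcent, hpsum]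
      ring
    · refine le_of_eq_of_le ?_ hsV
      rw [hV, Finset.mul_sum]
      refine Finset.sum_congr rfl fun i _ => ?_
      have := (hp i).ne'
      field_simp
      ring
    · have h : ∑ i, (p i - s * (p i * (f i - μ))) * f i
          = ∑ i, (p i * f i - s * (p i * (f i - μ) ^ 2) - s * μ * (p i * (f i - μ))) :=
        Finset.sum_congr rfl fun i _ => by ring
      rw [h, Finset.sum_sub_distrib, Finset.sum_sub_distrib, ← Finset.mul_sum, ← Finset.mul_sum,
        hcent, hsV', ← hμ, ← hV]
      ring
  · rintro v ⟨q, hq, hqε, rfl⟩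
    have hdiff : μ - ∑ i, q i * f i = ∑ i, (p i - q i) * (f i - μ) := by
      have h : ∑ i, (p i - q i) * (f i - μ)
          = ∑ i, (p i * f i - q i * f i - (p i * μ - q i * μ)) :=
        Finset.sum_congr rfl fun i _ => by ring
      rw [h, Finset.sum_sub_distrib, Finset.sum_sub_distrib, Finset.sum_sub_distrib,
        ← Finset.sum_mul, ← Finset.sum_mul, hpsum, hq, ← hμ]
      ring
    have hcs : (∑ i, (p i - q i) * (f i - μ)) ^ 2 ≤ (∑ i, (q i - p i) ^ 2 / p i) * V := by
      refine Finset.sum_sq_le_sum_mul_sum_of_sq_le_mul _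
        (fun i _ => div_nonneg (sq_nonneg _) (hp i).le)
        (fun i _ => mul_nonneg (hp i).le (sq_nonneg _)) fun i _ => le_of_eq ?_
      have := (hp i).ne'
      field_simp
      ring
    have := Real.le_sqrt_of_sq_le (hcs.trans (mul_le_mul_of_nonneg_right hqε hV0))
    linarith
end

section
/- Let p be a Borel probability measure on a measurable space, f a bounded measurable real-valued function, and ε ≥ 0. For every probability measure q absolutely continuous with respect to p satisfying ∫ |dq/dp − 1| dp ≤ ε, one has ∫ f dq ≥ ∫ f dp − (ε/2)·(sup f − inf f), where sup f and inf f denote the supremum and infimum of f over the space. -/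
open MeasureTheory
open scoped ENNReal

/-!
Write `r = dq/dp` and let `m` be the midpoint of `inf f` and `sup f`. As `∫ (r - 1) dp = 0`,
the difference `∫ f dp - ∫ f dq` equals `∫ (1 - r) (f - m) dp`. Since
`|f - m| ≤ (sup f - inf f) / 2` pointwise, it is at most `(sup f - inf f) / 2 * ∫ |r - 1| dp`.
-/

/-- **One-sided total-variation bound (Example 2).**
If `q ≪ p` are probability measures with `∫ |dq/dp − 1| dp ≤ ε`, then for any bounded
measurable `f` one has `∫ f dq ≥ ∫ f dp − (ε/2)·(sup f − inf f)`. -/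
theorem tv_ball_mean_lower_bound
    {C : Type*} [MeasurableSpace C]
    (p q : Measure C) [IsProbabilityMeasure p] [IsProbabilityMeasure q]
    (f : C → ℝ) (hf : Measurable f) (M : ℝ) (hfM : ∀ c, |f c| ≤ M)
    (ε : ℝ) (hε : 0 ≤ ε)
    (habs : q ≪ p)
    (htv : ∫⁻ c, ENNReal.ofReal |(q.rnDeriv p c).toReal - 1| ∂p ≤ ENNReal.ofReal ε) :
    ∫ c, f c ∂q ≥ ∫ c, f c ∂p - (ε / 2) * ((⨆ c, f c) - ⨅ c, f c) := by
  have hS : ∀ c, f c ≤ ⨆ c, f c :=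
    le_ciSup ⟨M, by rintro _ ⟨c, rfl⟩; exact (abs_le.1 (hfM c)).2⟩
  have hI : ∀ c, ⨅ c, f c ≤ f c :=
    ciInf_le ⟨-M, by rintro _ ⟨c, rfl⟩; exact (abs_le.1 (hfM c)).1⟩
  generalize (⨆ c, f c) = S at *
  generalize (⨅ c, f c) = I at *
  have hSI : 0 ≤ S - I := by
    obtain ⟨c⟩ := p.nonempty_of_neZero
    linarith [hS c, hI c]
  have hr : Integrable (fun c => (q.rnDeriv p c).toReal) p := Measure.integrable_toReal_rnDeriv
  have hr1 : Integrable (fun c => (q.rnDeriv p c).toReal - 1) p := hr.sub (integrable_const 1)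
  have hfp : Integrable f p :=
    Integrable.of_bound hf.aestronglyMeasurable M (.of_forall hfM)
  have hrf : Integrable (fun c => (q.rnDeriv p c).toReal * f c) p :=
    hr.mul_bdd hf.aestronglyMeasurable (.of_forall hfM)
  have hrint : ∫ c, (q.rnDeriv p c).toReal ∂p = 1 := by
    simpa using integral_rnDeriv_smul (f := fun _ => (1 : ℝ)) habs
  have hq : ∫ c, (q.rnDeriv p c).toReal * f c ∂p = ∫ c, f c ∂q := by
    simpa using integral_rnDeriv_smul (f := f) habs
  have htv' : ∫ c, |(q.rnDeriv p c).toReal - 1| ∂p ≤ ε := by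
    rw [integral_eq_lintegral_of_nonneg_ae (.of_forall fun _ => abs_nonneg _)
      hr1.abs.aestronglyMeasurable]
    exact ENNReal.toReal_le_of_le_ofReal hε htv
  have hsub : Integrable (fun c => f c - (q.rnDeriv p c).toReal * f c) p := hfp.sub hrf
  have key : ∫ c, (f c - (q.rnDeriv p c).toReal * f c
        + (S + I) / 2 * ((q.rnDeriv p c).toReal - 1)) ∂p
      ≤ ∫ c, (S - I) / 2 * |(q.rnDeriv p c).toReal - 1| ∂p := by
    refine integral_mono (hsub.add (hr1.const_mul _)) (hr1.abs.const_mul _) fun c => ?_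
    have hm : |(S + I) / 2 - f c| ≤ (S - I) / 2 :=
      abs_le.2 ⟨by linarith [hS c], by linarith [hI c]⟩
    calc f c - (q.rnDeriv p c).toReal * f c + (S + I) / 2 * ((q.rnDeriv p c).toReal - 1)
        = ((S + I) / 2 - f c) * ((q.rnDeriv p c).toReal - 1) := by ring
      _ ≤ |(S + I) / 2 - f c| * |(q.rnDeriv p c).toReal - 1| :=
        (le_abs_self _).trans (abs_mul _ _).le
      _ ≤ (S - I) / 2 * |(q.rnDeriv p c).toReal - 1| := by gcongr
  rw [integral_add hsub (hr1.const_mul _), integral_sub hfp hrf, integral_const_mul,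
    integral_const_mul, integral_sub hr (integrable_const 1), hrint, hq] at key
  simp only [integral_const, probReal_univ, smul_eq_mul, mul_one, sub_self, mul_zero,
    add_zero] at key
  nlinarith [mul_le_mul_of_nonneg_left htv' hSI]
end

section
/- Let p be a Borel probability measure on a measurable space, f a bounded measurable real-valued function, and ε ≥ 0. For every measurable function g with ∫ g dp = 0 and ∫ |g| dp ≤ ε, one has |∫ g·f dp| ≤ (ε/2)·(sup f − inf f), where sup f and inf f denote the supremum and infimum of f over the space. -/
/-!
Since `g` integrates to zero, subtracting a constant from `f` does not change `∫ g·f`. With the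
constant `m = (sup f + inf f) / 2`, the function `f - m` is bounded in absolute value by
`(sup f - inf f) / 2`, so `|∫ g·f| = |∫ g·(f - m)| ≤ (sup f - inf f) / 2 · ∫ |g|`, and
`∫ |g| ≤ ε`.
-/

open MeasureTheory
open scoped ENNReal

/-- **Core estimate in the proof of Example 2 (Total Variation).**
If `g` is measurable with `∫ g dp = 0` and `∫ |g| dp ≤ ε`, then for any bounded measurable
`f` one has `|∫ g·f dp| ≤ (ε/2)·(sup f − inf f)`. -/
theorem zero_mean_perturbation_bound
    {C : Type*} [MeasurableSpace C]
    (p : Measure C) [IsProbabilityMeasure p]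
    (f : C → ℝ) (hf : Measurable f) (M : ℝ) (hfM : ∀ c, |f c| ≤ M)
    (g : C → ℝ) (hg : Measurable g)
    (ε : ℝ) (hε : 0 ≤ ε)
    (hg0 : ∫ c, g c ∂p = 0)
    (hg1 : ∫⁻ c, ENNReal.ofReal |g c| ∂p ≤ ENNReal.ofReal ε) :
    |∫ c, g c * f c ∂p| ≤ (ε / 2) * ((⨆ c, f c) - ⨅ c, f c) := by
  have hgi : Integrable g p := by
    refine ⟨hg.aestronglyMeasurable, ?_⟩
    rw [hasFiniteIntegral_iff_norm]
    exact hg1.trans_lt ENNReal.ofReal_lt_top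
  have hgε : ∫ c, |g c| ∂p ≤ ε := by
    rw [← ENNReal.ofReal_le_ofReal_iff hε,
      ofReal_integral_eq_lintegral_ofReal hgi.abs (ae_of_all _ fun c => abs_nonneg _)]
    exact hg1
  have hfg : Integrable (fun c => g c * f c) p :=
    hgi.mul_bdd hf.aestronglyMeasurable (ae_of_all _ hfM)
  have hba : BddAbove (Set.range f) :=
    ⟨M, by rintro _ ⟨c, rfl⟩; exact (abs_le.1 (hfM c)).2⟩
  have hbb : BddBelow (Set.range f) :=
    ⟨-M, by rintro _ ⟨c, rfl⟩; exact (abs_le.1 (hfM c)).1⟩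
  have hsup : ∀ c, f c ≤ ⨆ c, f c := le_ciSup hba
  have hinf : ∀ c, ⨅ c, f c ≤ f c := ciInf_le hbb
  -- A probability space is nonempty, which gives `inf f ≤ sup f`.
  obtain ⟨c₀⟩ : Nonempty C := p.nonempty_of_neZero
  have hle : ⨅ c, f c ≤ ⨆ c, f c := (hinf c₀).trans (hsup c₀)
  generalize (⨆ c, f c) = S at *
  generalize (⨅ c, f c) = I at *
  have hshift : ∫ c, g c * f c ∂p = ∫ c, g c * (f c - (S + I) / 2) ∂p := by
    simp_rw [mul_sub]
    rw [integral_sub hfg (hgi.mul_const _), integral_mul_const, hg0, zero_mul, sub_zero]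
  calc |∫ c, g c * f c ∂p|
      = ‖∫ c, g c * (f c - (S + I) / 2) ∂p‖ := by rw [hshift, Real.norm_eq_abs]
    _ ≤ ∫ c, |g c| * ((S - I) / 2) ∂p := by
        refine norm_integral_le_of_norm_le (hgi.abs.mul_const _) (ae_of_all _ fun c => ?_)
        rw [Real.norm_eq_abs, abs_mul]
        refine mul_le_mul_of_nonneg_left (abs_le.2 ⟨?_, ?_⟩) (abs_nonneg _)
        · linarith [hinf c]
        · linarith [hsup c]
    _ = (∫ c, |g c| ∂p) * ((S - I) / 2) := integral_mul_const _ _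
    _ ≤ ε * ((S - I) / 2) := mul_le_mul_of_nonneg_right hgε (by linarith)
    _ = (ε / 2) * (S - I) := by ring
end

section
/- Let n ≥ 1, let p : Fin n → ℝ satisfy ∑ i, p i = 1, and let f : Fin n → ℝ and ε ≥ 0. Then the infimum, over all q : Fin n → ℝ with ∑ i, q i = 1 and ∑ i, |q i − p i| ≤ ε, of ∑ i, q i · f i, equals (∑ i, p i · f i) − (ε/2)·((max i, f i) − (min i, f i)), and this infimum is attained. -/
/-!
Write `d = q - p`, so that `∑ i, d i = 0`, and let `M = max f`, `m = min f`.
Since `d` has zero sum, `∑ i, d i * f i = ∑ i, d i * (f i - c)` for the midpoint `c = (M + m) / 2`,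
and `|f i - c| ≤ (M - m) / 2`; hence `∑ i, d i * f i ≥ -(ε / 2) * (M - m)`. Equality holds when
mass `ε / 2` is moved from a maximizer of `f` to a minimizer, which is allowed because `q` is a
signed vector.
-/


/-- **Example 2 (Total Variation), exact finite-dimensional form.**
The infimum of `∑ i, q i * f i` over signed vectors `q` of total mass `1` with
`∑ i, |q i − p i| ≤ ε` equals the `p`-mean of `f` minus `(ε/2)` times the range of `f`,
and it is attained. -/
theorem tv_finite_dim_duality
    (n : ℕ) (hn : 1 ≤ n)
    (p : Fin n → ℝ) (hpsum : ∑ i, p i = 1)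
    (f : Fin n → ℝ) (ε : ℝ) (hε : 0 ≤ ε) :
    IsLeast
      {v : ℝ | ∃ q : Fin n → ℝ, (∑ i, q i = 1) ∧
        (∑ i, |q i - p i| ≤ ε) ∧ v = ∑ i, q i * f i}
      ((∑ i, p i * f i) - (ε / 2) * ((⨆ i, f i) - ⨅ i, f i)) := by
  have : Nonempty (Fin n) := ⟨⟨0, hn⟩⟩
  obtain ⟨a, ha⟩ := exists_eq_ciInf_of_finite (f := f)
  obtain ⟨b, hb⟩ := exists_eq_ciSup_of_finite (f := f)
  have hm : ∀ i, f a ≤ f i := fun i => ha ▸ ciInf_le (Set.finite_range f).bddBelow i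
  have hM : ∀ i, f i ≤ f b := fun i => hb ▸ le_ciSup (Set.finite_range f).bddAbove i
  rw [← ha, ← hb]
  constructor
  -- When `f` is constant, `a` and `b` may coincide; then `q = p`, which is still optimal.
  · refine ⟨fun i => p i + ε / 2 * ((Pi.single a 1 : Fin n → ℝ) i - (Pi.single b 1 : Fin n → ℝ) i),
      ?_, ?_, ?_⟩
    · simp [Finset.sum_add_distrib, ← Finset.mul_sum, hpsum]
    · calc ∑ i, |p i + ε / 2 * ((Pi.single a 1 : Fin n → ℝ) i - (Pi.single b 1 : Fin n → ℝ) i) - p i|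
          ≤ ∑ i, ε / 2 * ((Pi.single a 1 : Fin n → ℝ) i + (Pi.single b 1 : Fin n → ℝ) i) := by
            refine Finset.sum_le_sum fun i _ => ?_
            have h1 : ∀ c : Fin n, 0 ≤ (Pi.single c 1 : Fin n → ℝ) i := fun c => by
              rw [Pi.single_apply]; split_ifs <;> norm_num
            rw [add_sub_cancel_left, abs_mul, abs_of_nonneg (by positivity : 0 ≤ ε / 2)]
            gcongr
            rw [abs_le]
            constructor <;> linarith [h1 a, h1 b]
        _ = ε := by
            simp only [← Finset.mul_sum, Finset.sum_add_distrib, Finset.sum_pi_single',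
              Finset.mem_univ, if_true]
            ring
    · simp only [add_mul, mul_assoc, sub_mul, Finset.sum_add_distrib, ← Finset.mul_sum,
        Finset.sum_sub_distrib, Pi.single_apply, ite_mul, one_mul, zero_mul, Finset.sum_ite_eq',
        Finset.mem_univ, if_true]
      ring
  · rintro v ⟨q, hq, hd, rfl⟩
    have key : ∀ i, p i * f i - |q i - p i| * ((f b - f a) / 2)
        + (q i - p i) * ((f b + f a) / 2) ≤ q i * f i := fun i => by
      have h2 : |f i - (f b + f a) / 2| ≤ (f b - f a) / 2 := by
        rw [abs_le]
        constructor <;> linarith [hm i, hM i]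
      have h3 := neg_abs_le ((q i - p i) * (f i - (f b + f a) / 2))
      rw [abs_mul] at h3
      have h4 := mul_le_mul_of_nonneg_left h2 (abs_nonneg (q i - p i))
      linarith
    have hsum := Finset.sum_le_sum fun i (_ : i ∈ Finset.univ) => key i
    simp only [Finset.sum_add_distrib, Finset.sum_sub_distrib, ← Finset.sum_mul, hq, hpsum,
      sub_self, zero_mul, add_zero] at hsum
    have h5 := mul_le_mul_of_nonneg_right hd (by linarith [hm b] : 0 ≤ (f b - f a) / 2)
    linarith
end

section
/- Let C be a compact metrizable topological space, p a Borel probability measure on C, f : C → ℝ a bounded measurable function, and ε > 0. Then the infimum, over all Borel probability measures q on C absolutely continuous with respect to p with KL(q, p) ≤ ε, of ∫ f dq, equals the supremum over λ > 0 of −λ·ε − λ·log ∫ exp(−f(c)/λ) dp(c). -/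
/-!
Weak duality is Gibbs' inequality `0 ≤ KL(q, p_g)` for the exponential tilt `p_g ∝ exp(g) p` with
`g = -f/λ`: expanded, it reads `-λ KL(q, p) - λ log ∫ exp(-f/λ) dp ≤ ∫ f dq` (`weak_duality`).

Strong duality follows the Gibbs measures `q_a ∝ exp(-a f) p` for `a = 1/λ`. Their divergence
`k a = KL(q_a, p)` satisfies `k a = -a ∫ f dq_a - log ∫ exp(-a f) dp` (`integral_llr_gibbs`), so if
`q_a` is feasible, the gap between its primal value and the dual value at `λ = 1/a` is
`(ε - k a) / a`. The function `k` is continuous with `k 0 = 0`. Either it reaches `ε` at some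
`a > 0` and the gap vanishes there, or every `q_a` is feasible and the gap, at most `ε / a`, tends
to `0` as `a → ∞`.
-/

open MeasureTheory
open scoped ENNReal

lemma abs_mul_le_of_abs_le {C : Type*} {f : C → ℝ} {M : ℝ} (hfM : ∀ c, |f c| ≤ M)
    (t : ℝ) (c : C) : |t * f c| ≤ |t| * M := by
  rw [abs_mul]
  exact mul_le_mul_of_nonneg_left (hfM c) (abs_nonneg t)

section GibbsMeasures

variable {C : Type*} [MeasurableSpace C] {p : Measure C} {f : C → ℝ} {M : ℝ}

lemma integrable_of_abs_le [IsFiniteMeasure p] (hf : Measurable f) (hfM : ∀ c, |f c| ≤ M) :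
    Integrable f p :=
  Integrable.of_bound hf.aestronglyMeasurable M (Filter.Eventually.of_forall hfM)

lemma integrable_exp_of_abs_le [IsFiniteMeasure p] (hf : Measurable f) (hfM : ∀ c, |f c| ≤ M) :
    Integrable (fun c => Real.exp (f c)) p := by
  refine integrable_of_abs_le (M := Real.exp M) (by fun_prop) fun c => ?_
  rw [Real.abs_exp]
  exact Real.exp_le_exp.2 ((le_abs_self _).trans (hfM c))

lemma integral_llr_nonneg {q r : Measure C} [IsProbabilityMeasure q] [IsProbabilityMeasure r]
    (hqr : q ≪ r) (hint : Integrable (llr q r) q) : 0 ≤ ∫ c, llr q r c ∂q := by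
  simpa using InformationTheory.integral_llr_add_sub_measure_univ_nonneg hqr hint

/-- One half of the Donsker–Varadhan variational formula, obtained from Gibbs' inequality for `q`
against the tilted measure `p.tilted g`. -/
lemma integral_sub_log_le_integral_llr {q : Measure C} [IsProbabilityMeasure p]
    [IsProbabilityMeasure q] (hqp : q ≪ p) (hint : Integrable (llr q p) q)
    (hf : Measurable f) (hfM : ∀ c, |f c| ≤ M) :
    (∫ c, f c ∂q) - Real.log (∫ c, Real.exp (f c) ∂p) ≤ ∫ c, llr q p c ∂q := by
  have hfq : Integrable f q := integrable_of_abs_le hf hfM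
  have hep : Integrable (fun c => Real.exp (f c)) p := integrable_exp_of_abs_le hf hfM
  have := isProbabilityMeasure_tilted hep
  have h := integral_llr_nonneg (hqp.trans (absolutelyContinuous_tilted hep))
    (integrable_llr_tilted_right hqp hfq hint hep)
  rw [integral_llr_tilted_right hqp hfq hep hint] at h
  linarith

lemma weak_duality_s8 {q : Measure C} [IsProbabilityMeasure p]
    [IsProbabilityMeasure q] (hqp : q ≪ p) (hint : Integrable (llr q p) q)
    (hf : Measurable f) (hfM : ∀ c, |f c| ≤ M) {ε lam : ℝ} (hkl : ∫ c, llr q p c ∂q ≤ ε)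
    (hlam : 0 < lam) :
    -lam * ε - lam * Real.log (∫ c, Real.exp (-f c / lam) ∂p) ≤ ∫ c, f c ∂q := by
  have h := integral_sub_log_le_integral_llr hqp hint (f := fun c => -lam⁻¹ * f c) (by fun_prop)
    (abs_mul_le_of_abs_le hfM _)
  have hexp : ∀ c, -f c / lam = -lam⁻¹ * f c := fun c => by ring
  simp_rw [hexp]
  rw [integral_const_mul] at h
  have h2 := mul_le_mul_of_nonneg_left (h.trans hkl) hlam.le
  have h3 : lam * (-lam⁻¹ * ∫ c, f c ∂q) = -∫ c, f c ∂q := by field_simp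
  rw [mul_sub, h3] at h2
  linarith

lemma llr_gibbs_ae [IsProbabilityMeasure p] (hf : Measurable f) (hfM : ∀ c, |f c| ≤ M) :
    llr (p.tilted f) p =ᵐ[p.tilted f] fun c => f c - Real.log (∫ c, Real.exp (f c) ∂p) :=
  (tilted_absolutelyContinuous p f).ae_eq
    (log_rnDeriv_tilted_left_self (integrable_exp_of_abs_le hf hfM))

lemma integrable_llr_gibbs [IsProbabilityMeasure p] (hf : Measurable f) (hfM : ∀ c, |f c| ≤ M) :
    Integrable (llr (p.tilted f) p) (p.tilted f) := by
  have := isProbabilityMeasure_tilted (integrable_exp_of_abs_le (p := p) hf hfM)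
  rw [integrable_congr (llr_gibbs_ae hf hfM)]
  exact (integrable_of_abs_le hf hfM).sub (integrable_const _)

lemma integral_llr_gibbs [IsProbabilityMeasure p] (hf : Measurable f) (hfM : ∀ c, |f c| ≤ M) :
    ∫ c, llr (p.tilted f) p c ∂(p.tilted f) =
      (∫ c, f c ∂(p.tilted f)) - Real.log (∫ c, Real.exp (f c) ∂p) := by
  have := isProbabilityMeasure_tilted (integrable_exp_of_abs_le (p := p) hf hfM)
  rw [integral_congr_ae (llr_gibbs_ae hf hfM),
    integral_sub (integrable_of_abs_le hf hfM) (integrable_const _)]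
  simp

lemma continuousOn_integral_exp_mul [IsProbabilityMeasure p] (hf : Measurable f)
    (hfM : ∀ c, |f c| ≤ M) {g : C → ℝ} (hg : Measurable g) {K : ℝ} (hgK : ∀ c, |g c| ≤ K) (A : ℝ) :
    ContinuousOn (fun a : ℝ => ∫ c, Real.exp (-a * f c) * g c ∂p) (Set.Icc 0 A) := by
  refine continuousOn_of_dominated (bound := fun _ => Real.exp (A * M) * K) ?_ ?_
    (integrable_const _) ?_
  · intro a _
    exact Measurable.aestronglyMeasurable (by fun_prop)
  · intro a ha
    refine Filter.Eventually.of_forall fun c => ?_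
    have hM : 0 ≤ M := (abs_nonneg _).trans (hfM c)
    rw [Real.norm_eq_abs, abs_mul, Real.abs_exp]
    refine mul_le_mul (Real.exp_le_exp.2 ?_) (hgK c) (abs_nonneg _) (Real.exp_pos _).le
    calc -a * f c ≤ |-a| * M := (le_abs_self _).trans (abs_mul_le_of_abs_le hfM _ c)
      _ ≤ A * M := by
        rw [abs_neg, abs_of_nonneg ha.1]
        exact mul_le_mul_of_nonneg_right ha.2 hM
  · refine Filter.Eventually.of_forall fun c => Continuous.continuousOn ?_
    fun_prop

lemma continuousOn_integral_llr_gibbs [IsProbabilityMeasure p] (hf : Measurable f)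
    (hfM : ∀ c, |f c| ≤ M) (A : ℝ) :
    ContinuousOn (fun a : ℝ => ∫ c, llr (p.tilted fun c => -a * f c) p c
      ∂(p.tilted fun c => -a * f c)) (Set.Icc 0 A) := by
  have hexp : ∀ a : ℝ, Integrable (fun c => Real.exp (-a * f c)) p := fun a =>
    integrable_exp_of_abs_le (by fun_prop) (abs_mul_le_of_abs_le hfM (-a))
  have hpos : ∀ a : ℝ, 0 < ∫ c, Real.exp (-a * f c) ∂p := fun a => integral_exp_pos (hexp a)
  have hZ : ContinuousOn (fun a : ℝ => ∫ c, Real.exp (-a * f c) ∂p) (Set.Icc 0 A) := by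
    simpa using continuousOn_integral_exp_mul (p := p) hf hfM (g := fun _ => 1) (K := 1)
      measurable_const (by simp) A
  have hN := continuousOn_integral_exp_mul (p := p) hf hfM hf hfM A
  have key : ∀ a : ℝ, ∫ c, llr (p.tilted fun c => -a * f c) p c ∂(p.tilted fun c => -a * f c) =
      -a * ((∫ c, Real.exp (-a * f c) * f c ∂p) / ∫ c, Real.exp (-a * f c) ∂p)
        - Real.log (∫ c, Real.exp (-a * f c) ∂p) := by
    intro a
    rw [integral_llr_gibbs (by fun_prop) (abs_mul_le_of_abs_le hfM (-a)), integral_const_mul,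
      integral_tilted]
    simp_rw [smul_eq_mul, div_mul_eq_mul_div]
    rw [integral_div]
  simp_rw [key]
  exact (continuousOn_id.neg.mul (hN.div hZ fun a _ => (hpos a).ne')).sub
    (hZ.log fun a _ => (hpos a).ne')

end GibbsMeasures

/-- **Example 3 (KL-divergence) duality.**
For a compact metrizable space `C`, a Borel probability measure `p`, a bounded measurable
`f : C → ℝ` and `ε > 0`, the infimum of `∫ f dq` over Borel probability measures `q ≪ p`
with `KL(q, p) = ∫ log(dq/dp) dq ≤ ε` equals the supremum over `λ > 0` of
`−λ·ε − λ·log ∫ exp(−f/λ) dp`. -/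
theorem kl_divergence_duality
    {C : Type*} [TopologicalSpace C] [CompactSpace C]
    [TopologicalSpace.MetrizableSpace C] [MeasurableSpace C] [BorelSpace C]
    (p : Measure C) [IsProbabilityMeasure p]
    (f : C → ℝ) (hf : Measurable f) (M : ℝ) (hfM : ∀ c, |f c| ≤ M)
    (ε : ℝ) (hε : 0 < ε) :
    sInf {v : ℝ | ∃ q : Measure C, IsProbabilityMeasure q ∧ q ≪ p ∧
        Integrable (fun c => Real.log ((q.rnDeriv p c).toReal)) q ∧
        (∫ c, Real.log ((q.rnDeriv p c).toReal) ∂q) ≤ ε ∧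
        v = ∫ c, f c ∂q} =
      sSup {v : ℝ | ∃ lam : ℝ, 0 < lam ∧
        v = -lam * ε - lam * Real.log (∫ c, Real.exp (-f c / lam) ∂p)} := by
  set P : Set ℝ := {v : ℝ | ∃ q : Measure C, IsProbabilityMeasure q ∧ q ≪ p ∧
        Integrable (fun c => Real.log ((q.rnDeriv p c).toReal)) q ∧
        (∫ c, Real.log ((q.rnDeriv p c).toReal) ∂q) ≤ ε ∧
        v = ∫ c, f c ∂q} with hP
  set D : Set ℝ := {v : ℝ | ∃ lam : ℝ, 0 < lam ∧
        v = -lam * ε - lam * Real.log (∫ c, Real.exp (-f c / lam) ∂p)} with hD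
  have hDP : ∀ d ∈ D, ∀ v ∈ P, d ≤ v := by
    rintro d ⟨lam, hlam, rfl⟩ v ⟨q, hq, hqp, hint, hkl, rfl⟩
    exact weak_duality_s8 hqp hint hf hfM hkl hlam
  let Q : ℝ → Measure C := fun a => p.tilted fun c => -a * f c
  let k : ℝ → ℝ := fun a => ∫ c, llr (Q a) p c ∂(Q a)
  have hmeas : ∀ a : ℝ, Measurable fun c => -a * f c := fun a => by fun_prop
  have hbd : ∀ a : ℝ, ∀ c, |-a * f c| ≤ |-a| * M := fun a => abs_mul_le_of_abs_le hfM (-a)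
  have hQprob : ∀ a, IsProbabilityMeasure (Q a) := fun a =>
    isProbabilityMeasure_tilted (integrable_exp_of_abs_le (hmeas a) (hbd a))
  have hQint : ∀ a, Integrable (llr (Q a) p) (Q a) := fun a =>
    integrable_llr_gibbs (hmeas a) (hbd a)
  have hQP : ∀ a, k a ≤ ε → ∫ c, f c ∂(Q a) ∈ P := fun a ha =>
    ⟨Q a, hQprob a, tilted_absolutelyContinuous _ _, hQint a, ha, rfl⟩
  have hk0 : k 0 = 0 := by
    have := integral_llr_gibbs (p := p) (hmeas 0) (hbd 0)
    simpa [k, Q] using this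
  have hknonneg : ∀ a, 0 ≤ k a := fun a =>
    integral_llr_nonneg (tilted_absolutelyContinuous _ _) (hQint a)
  have hgap : ∀ a, 0 < a → (∫ c, f c ∂(Q a)) - (ε - k a) / a ∈ D := by
    intro a ha
    refine ⟨a⁻¹, inv_pos.2 ha, ?_⟩
    have hk : k a = -a * (∫ c, f c ∂(Q a)) - Real.log (∫ c, Real.exp (-a * f c) ∂p) := by
      rw [← integral_const_mul]
      exact integral_llr_gibbs (hmeas a) (hbd a)
    have hexp : ∀ c, -f c / a⁻¹ = -a * f c := fun c => by rw [div_inv_eq_mul]; ring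
    simp_rw [hexp]
    rw [hk]
    field_simp
    ring
  have hPne : P.Nonempty := ⟨_, hQP 0 (hk0.trans_le hε.le)⟩
  have hDne : D.Nonempty := ⟨_, hgap 1 one_pos⟩
  obtain ⟨v₀, hv₀⟩ := hPne
  obtain ⟨d₀, hd₀⟩ := hDne
  have hPbdd : BddBelow P := ⟨d₀, fun v hv => hDP d₀ hd₀ v hv⟩
  have hDbdd : BddAbove D := ⟨v₀, fun d hd => hDP d hd v₀ hv₀⟩
  apply le_antisymm
  · by_cases hex : ∃ A, 0 ≤ A ∧ ε ≤ k A
    · obtain ⟨A, hA0, hA⟩ := hex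
      obtain ⟨a, ha, hka⟩ := intermediate_value_Icc hA0
        (continuousOn_integral_llr_gibbs (p := p) hf hfM A)
        (show ε ∈ Set.Icc (k 0) (k A) from ⟨hk0.trans_le hε.le, hA⟩)
      change k a = ε at hka
      have ha0 : 0 < a := by
        refine lt_of_le_of_ne ha.1 fun h => ?_
        rw [← h, hk0] at hka
        exact hε.ne hka
      have h := hgap a ha0
      rw [hka, sub_self, zero_div, sub_zero] at h
      exact (csInf_le hPbdd (hQP a hka.le)).trans (le_csSup hDbdd h)
    · push Not at hex
      refine le_of_forall_pos_le_add fun δ hδ => ?_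
      -- At `a = ε / δ` the duality gap is at most `ε / a = δ`.
      have ha : 0 < ε / δ := div_pos hε hδ
      have h1 := csInf_le hPbdd (hQP _ (hex _ ha.le).le)
      have h2 := le_csSup hDbdd (hgap _ ha)
      have h3 : (ε - k (ε / δ)) / (ε / δ) ≤ δ := by
        rw [div_le_iff₀ ha, mul_div_cancel₀ _ hδ.ne']
        linarith [hknonneg (ε / δ)]
      linarith
  · exact csSup_le ⟨d₀, hd₀⟩ fun d hd => le_csInf ⟨v₀, hv₀⟩ fun v hv => hDP d hd v hv
end

section
/- Let n ≥ 1, let p : Fin n → ℝ satisfy p i > 0 for all i and ∑ i, p i = 1, and let f : Fin n → ℝ and ε > 0. Then the infimum, over all q : Fin n → ℝ with q i ≥ 0 for all i, ∑ i, q i = 1, and ∑ i, q i · log(q i / p i) ≤ ε (with the convention 0·log 0 = 0), of ∑ i, q i · f i, equals the supremum over λ > 0 of −λ·ε − λ·log ∑ i, p i · exp(−f i / λ). -/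
/-!
Weak duality is the Donsker–Varadhan inequality
`∑ q a - log ∑ p exp a ≤ KL(q, p)` at `a = -f / λ` (`sum_mul_sub_log_le_kl`).

For the converse, consider the tilted vectors `q_s ∝ p exp (-s f)`, `s = 1 / λ`. They attain equality
in that inequality (`kl_tilt`), so `q_s` misses the dual value at `λ` by exactly `λ (ε - KL(q_s, p))`.
Given `η > 0`, start at `λ = η / ε`. If `q_s` is feasible there, the gap is at most `λ ε = η`
because `KL ≥ 0`. If not, then `KL(q_s, p)`, which is continuous in `s` and vanishes at `s = 0`,
takes the value `ε` at a smaller `s > 0`, where the gap is zero. No limit `λ → 0` is needed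
(`exists_gap_le`).
-/

/-- The Donsker–Varadhan inequality on a finite type. -/
lemma sum_mul_sub_log_le_kl {n : ℕ} (p : Fin n → ℝ) (hp : ∀ i, 0 < p i) (q a : Fin n → ℝ)
    (hq : ∀ i, 0 ≤ q i) (hqsum : ∑ i, q i = 1) (hZ : 0 < ∑ i, p i * Real.exp (a i)) :
    ∑ i, q i * a i - Real.log (∑ i, p i * Real.exp (a i))
      ≤ ∑ i, q i * Real.log (q i / p i) := by
  set Z := ∑ i, p i * Real.exp (a i) with hZdef
  -- The termwise bound is `log x ≤ x - 1` at `x = p exp a / (Z q)`.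
  have key : ∀ i, q i * a i - q i * Real.log Z - q i * Real.log (q i / p i)
      ≤ p i * Real.exp (a i) / Z - q i := by
    intro i
    rcases (hq i).eq_or_lt with h | h
    · rw [← h]
      simpa using (div_pos (mul_pos (hp i) (Real.exp_pos _)) hZ).le
    · have hlog := Real.log_le_sub_one_of_pos
        (div_pos (mul_pos (hp i) (Real.exp_pos (a i))) (mul_pos hZ h))
      rw [Real.log_div (mul_pos (hp i) (Real.exp_pos _)).ne' (mul_pos hZ h).ne',
        Real.log_mul (hp i).ne' (Real.exp_pos _).ne', Real.log_mul hZ.ne' h.ne',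
        Real.log_exp] at hlog
      rw [Real.log_div h.ne' (hp i).ne']
      have hm := mul_le_mul_of_nonneg_left hlog h.le
      have he : q i * (p i * Real.exp (a i) / (Z * q i) - 1)
          = p i * Real.exp (a i) / Z - q i := by
        field_simp
      rw [he] at hm
      linarith
  have hsum := Finset.sum_le_sum fun i (_ : i ∈ Finset.univ) => key i
  simp only [Finset.sum_sub_distrib, ← Finset.sum_mul, ← Finset.sum_div, hqsum] at hsum
  rw [← hZdef, div_self hZ.ne'] at hsum
  linarith

/-- The exponential tilting of `p` by `a`, normalized to total mass one. -/
noncomputable def tilt {n : ℕ} (p a : Fin n → ℝ) (i : Fin n) : ℝ :=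
  p i * Real.exp (a i) / ∑ j, p j * Real.exp (a j)

lemma sum_tilt {n : ℕ} (p a : Fin n → ℝ) (hZ : 0 < ∑ i, p i * Real.exp (a i)) :
    ∑ i, tilt p a i = 1 := by
  simp only [tilt, ← Finset.sum_div]
  exact div_self hZ.ne'

/-- Tilted vectors attain equality in the Donsker–Varadhan inequality. -/
lemma kl_tilt {n : ℕ} (p : Fin n → ℝ) (hp : ∀ i, 0 < p i) (a : Fin n → ℝ)
    (hZ : 0 < ∑ i, p i * Real.exp (a i)) :
    ∑ i, tilt p a i * Real.log (tilt p a i / p i)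
      = ∑ i, tilt p a i * a i - Real.log (∑ i, p i * Real.exp (a i)) := by
  have h : ∀ i, Real.log (tilt p a i / p i)
      = a i - Real.log (∑ i, p i * Real.exp (a i)) := by
    intro i
    have hd : tilt p a i / p i = Real.exp (a i) / ∑ j, p j * Real.exp (a j) := by
      have := (hp i).ne'
      unfold tilt
      field_simp
    rw [hd, Real.log_div (Real.exp_pos _).ne' hZ.ne', Real.log_exp]
  simp only [h, mul_sub, Finset.sum_sub_distrib, ← Finset.sum_mul, sum_tilt p a hZ, one_mul]

/-- Primal and dual values come arbitrarily close to each other along the tilted vectors. -/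
lemma exists_gap_le {n : ℕ} (p : Fin n → ℝ) (hp : ∀ i, 0 < p i) (hpsum : ∑ i, p i = 1)
    (hZ : ∀ a : Fin n → ℝ, 0 < ∑ i, p i * Real.exp (a i))
    (f : Fin n → ℝ) (ε : ℝ) (hε : 0 < ε) (η : ℝ) (hη : 0 < η) :
    ∃ q : Fin n → ℝ, ∃ lam : ℝ, (∀ i, 0 ≤ q i) ∧ (∑ i, q i = 1) ∧
      (∑ i, q i * Real.log (q i / p i) ≤ ε) ∧ 0 < lam ∧
      ∑ i, q i * f i ≤
        -lam * ε - lam * Real.log (∑ i, p i * Real.exp (-f i / lam)) + η := by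
  let a : ℝ → Fin n → ℝ := fun s i => -f i * s
  let g : ℝ → ℝ := fun s =>
    ∑ i, tilt p (a s) i * a s i - Real.log (∑ i, p i * Real.exp (a s i))
  have hnn : ∀ s i, 0 ≤ tilt p (a s) i := fun s i =>
    (div_pos (mul_pos (hp i) (Real.exp_pos _)) (hZ _)).le
  have hgnn : ∀ s, 0 ≤ g s := by
    intro s
    have h := sum_mul_sub_log_le_kl p hp (tilt p (a s)) 0 (hnn s) (sum_tilt _ _ (hZ _)) (hZ _)
    rw [kl_tilt p hp _ (hZ _)] at h
    simpa [hpsum, g] using h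
  have hgcont : Continuous g := by
    have hZc : Continuous fun s => ∑ i, p i * Real.exp (a s i) := by fun_prop
    refine Continuous.sub (continuous_finsetSum _ fun i _ => Continuous.mul ?_ (by fun_prop))
      (hZc.log fun s => (hZ _).ne')
    exact Continuous.div (by fun_prop) hZc fun s => (hZ _).ne'
  have hg0 : g 0 = 0 := by simp [g, a, hpsum]
  -- It suffices to find a tilt that is feasible with duality gap `(ε - g s) / s` at most `η`.
  suffices hs : ∃ s, 0 < s ∧ g s ≤ ε ∧ s⁻¹ * (ε - g s) ≤ η by
    obtain ⟨s, hs, hgs, hgap⟩ := hs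
    refine ⟨tilt p (a s), s⁻¹, hnn s, sum_tilt _ _ (hZ _), ?_, inv_pos.2 hs, ?_⟩
    · rw [kl_tilt p hp _ (hZ _)]
      exact hgs
    · have he : ∑ i, tilt p (a s) i * a s i = -(s * ∑ i, tilt p (a s) i * f i) := by
        rw [Finset.mul_sum, ← Finset.sum_neg_distrib]
        exact Finset.sum_congr rfl fun i _ => by simp only [a]; ring
      have hg : s⁻¹ * g s = -∑ i, tilt p (a s) i * f i
          - s⁻¹ * Real.log (∑ i, p i * Real.exp (a s i)) := by
        simp only [g, he, mul_sub, mul_neg, inv_mul_cancel_left₀ hs.ne']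
      simp only [div_inv_eq_mul]
      change _ ≤ -s⁻¹ * ε - s⁻¹ * Real.log (∑ i, p i * Real.exp (a s i)) + η
      rw [mul_sub] at hgap
      linarith
  have hs₀ : 0 < ε / η := div_pos hε hη
  by_cases h : g (ε / η) ≤ ε
  · refine ⟨ε / η, hs₀, h, ?_⟩
    calc (ε / η)⁻¹ * (ε - g (ε / η)) ≤ (ε / η)⁻¹ * ε :=
          mul_le_mul_of_nonneg_left (by linarith [hgnn (ε / η)]) (inv_pos.2 hs₀).le
      _ = η := by field_simp
  · obtain ⟨s, hs, hgs⟩ := intermediate_value_Icc hs₀.le hgcont.continuousOn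
      ⟨by rw [hg0]; exact hε.le, (not_le.1 h).le⟩
    refine ⟨s, hs.1.lt_of_ne ?_, hgs.le, by rw [hgs, sub_self, mul_zero]; exact hη.le⟩
    rintro rfl
    exact hε.ne (hg0.symm.trans hgs)

/-- **Example 3 (KL-divergence), exact finite-dimensional form.**
The infimum of `∑ i, q i * f i` over probability vectors `q` with
`KL(q, p) = ∑ i, q i · log(q i / p i) ≤ ε` (with the convention `0·log 0 = 0`) equals the
supremum over `λ > 0` of `−λ·ε − λ·log ∑ i, p i · exp(−f i / λ)`. -/
theorem kl_finite_dim_duality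
    (n : ℕ) (hn : 1 ≤ n)
    (p : Fin n → ℝ) (hp : ∀ i, 0 < p i) (hpsum : ∑ i, p i = 1)
    (f : Fin n → ℝ) (ε : ℝ) (hε : 0 < ε) :
    sInf {v : ℝ | ∃ q : Fin n → ℝ, (∀ i, 0 ≤ q i) ∧ (∑ i, q i = 1) ∧
        (∑ i, q i * Real.log (q i / p i) ≤ ε) ∧ v = ∑ i, q i * f i} =
      sSup {v : ℝ | ∃ lam : ℝ, 0 < lam ∧
        v = -lam * ε - lam * Real.log (∑ i, p i * Real.exp (-f i / lam))} := by
  have hZ : ∀ a : Fin n → ℝ, 0 < ∑ i, p i * Real.exp (a i) := fun a =>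
    Finset.sum_pos (fun i _ => mul_pos (hp i) (Real.exp_pos _)) ⟨⟨0, hn⟩, Finset.mem_univ _⟩
  have hgap := exists_gap_le p hp hpsum hZ f ε hε
  set A := {v : ℝ | ∃ q : Fin n → ℝ, (∀ i, 0 ≤ q i) ∧ (∑ i, q i = 1) ∧
        (∑ i, q i * Real.log (q i / p i) ≤ ε) ∧ v = ∑ i, q i * f i}
  set B := {v : ℝ | ∃ lam : ℝ, 0 < lam ∧
        v = -lam * ε - lam * Real.log (∑ i, p i * Real.exp (-f i / lam))}
  have hweak : ∀ v ∈ A, ∀ w ∈ B, w ≤ v := by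
    rintro _ ⟨q, hq, hqsum, hkl, rfl⟩ _ ⟨lam, hlam, rfl⟩
    have h := (sum_mul_sub_log_le_kl p hp q (fun i => -f i / lam) hq hqsum (hZ _)).trans hkl
    have he : lam * ∑ i, q i * (-f i / lam) = -∑ i, q i * f i := by
      rw [Finset.mul_sum, ← Finset.sum_neg_distrib]
      exact Finset.sum_congr rfl fun i _ => by field_simp
    have hm := mul_le_mul_of_nonneg_left h hlam.le
    rw [mul_sub, he] at hm
    linarith
  have hA : A.Nonempty := by
    obtain ⟨q, lam, h1, h2, h3, -⟩ := hgap 1 one_pos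
    exact ⟨_, q, h1, h2, h3, rfl⟩
  have hB : B.Nonempty := ⟨_, 1, one_pos, rfl⟩
  obtain ⟨v₀, hv₀⟩ := hA
  obtain ⟨w₀, hw₀⟩ := hB
  have hAbdd : BddBelow A := ⟨w₀, fun v hv => hweak v hv w₀ hw₀⟩
  have hBbdd : BddAbove B := ⟨v₀, fun w hw => hweak v₀ hv₀ w hw⟩
  apply le_antisymm
  · refine le_of_forall_pos_le_add fun η hη => ?_
    obtain ⟨q, lam, h1, h2, h3, hlam, hle⟩ := hgap η hη
    have hinf : sInf A ≤ _ := csInf_le hAbdd ⟨q, h1, h2, h3, rfl⟩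
    have hsup : _ ≤ sSup B := le_csSup hBbdd ⟨lam, hlam, rfl⟩
    linarith
  · exact csSup_le ⟨w₀, hw₀⟩ fun w hw => le_csInf ⟨v₀, hv₀⟩ fun v hv => hweak v hv w hw
end
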